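/- arXiv:1205.0208 — 5 statements merged into one kernel-verified Lean document; each statement's English description precedes it below -/
import Mathlib

section
/- Assume X(t,μ) is invertible for every t ∈ I and μ ∈ M. Then for all t ∈ I and all μ1, μ2 ∈ M, ‖X(t,μ1) − X(t,μ2)‖ ≤ e^{2n̂(μ1) + n̂(μ2)} ∫_I ‖A(s,μ1) − A(s,μ2)‖ ds, where n̂(μ) = ∫_I ‖A(s,μ)‖ ds. In particular, if n̂(μ) ≤ K for all μ, then ‖X(t,μ1) − X(t,μ2)‖ ≤ e^{3K} ∫_I ‖A(s,μ1) − A(s,μ2)‖ ds. -/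
/-!
The difference `D = X(·,μ₁) - X(·,μ₂)` satisfies
`D(t) = ∫_{t₀}^t (A₁ D + (A₁ - A₂) X₂)`, so two applications of Grönwall's inequality suffice:
applied to `X₂ = 1 + ∫ A₂ X₂` it gives `‖X₂‖ ≤ e^{n̂(μ₂)}`, and applied to `D` it gives
`‖D‖ ≤ e^{n̂(μ₁) + n̂(μ₂)} ∫_I ‖A₁ - A₂‖`, which is stronger than the claim because
`n̂(μ₁) ≥ 0`.

The coefficients are only integrable, so Grönwall's inequality is needed in its integral form with
an `L¹` coefficient. It is proved in `gronwall_forward` by the integrating factor `exp (-∫ a)`: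
the product `(c + ∫ a u) exp (-∫ a)` is absolutely continuous with a.e. nonpositive derivative, and
the fundamental theorem of calculus holds for absolutely continuous functions.
-/

open MeasureTheory Set

/-- The negative exponential is 1-Lipschitz on `[0, ∞)`, so it preserves absolute continuity of
nonnegative functions. -/
lemma absolutelyContinuousOnInterval_exp_neg {f : ℝ → ℝ} {x y : ℝ}
    (hf : AbsolutelyContinuousOnInterval f x y) (hf0 : ∀ t ∈ uIcc x y, 0 ≤ f t) :
    AbsolutelyContinuousOnInterval (fun t => Real.exp (-f t)) x y := by
  have key : ∀ p q : ℝ, 0 ≤ p → p ≤ q → |Real.exp (-p) - Real.exp (-q)| ≤ |p - q| := by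
    intro p q hp hpq
    have h1 : Real.exp (-q) ≤ Real.exp (-p) := Real.exp_le_exp.2 (by linarith)
    have h2 : Real.exp (-p) ≤ 1 := Real.exp_le_one_iff.2 (by linarith)
    have h3 : p - q + 1 ≤ Real.exp (p - q) := Real.add_one_le_exp _
    have h4 : Real.exp (-q) = Real.exp (-p) * Real.exp (p - q) := by
      rw [← Real.exp_add]; ring_nf
    rw [abs_of_nonneg (by linarith), abs_of_nonpos (by linarith), h4]
    nlinarith [Real.exp_pos (-p)]
  rw [absolutelyContinuousOnInterval_iff] at hf ⊢
  intro ε hε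
  obtain ⟨δ, hδ, h⟩ := hf ε hε
  refine ⟨δ, hδ, fun E hE hlen => lt_of_le_of_lt (Finset.sum_le_sum fun i hi => ?_) (h E hE hlen)⟩
  have hp := hf0 _ (hE.1 i hi).1
  have hq := hf0 _ (hE.1 i hi).2
  rw [Real.dist_eq, Real.dist_eq]
  rcases le_total (f (E.2 i).1) (f (E.2 i).2) with hle | hle
  · exact key _ _ hp hle
  · rw [abs_sub_comm, abs_sub_comm (f _)]
    exact key _ _ hq hle

/-- Grönwall's inequality in integral form, to the right of the base point, for a coefficient `a`
that is merely integrable. -/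
lemma gronwall_forward {a u : ℝ → ℝ} {x y c : ℝ} (hxy : x ≤ y)
    (ha : IntervalIntegrable a volume x y) (ha0 : ∀ s, 0 ≤ a s)
    (hau : IntervalIntegrable (fun s => a s * u s) volume x y)
    (hu : ∀ t ∈ Icc x y, u t ≤ c + ∫ s in x..t, a s * u s) :
    u y ≤ c * Real.exp (∫ s in x..y, a s) := by
  set V : ℝ → ℝ := fun t => c + ∫ s in x..t, a s * u s with hV
  set α : ℝ → ℝ := fun t => ∫ s in x..t, a s with hα
  have hVac : AbsolutelyContinuousOnInterval V x y := by
    have hc : AbsolutelyContinuousOnInterval (fun _ : ℝ => c) x y :=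
      (LipschitzWith.const c).lipschitzOnWith.absolutelyContinuousOnInterval
    exact hc.add (hau.absolutelyContinuousOnInterval_intervalIntegral left_mem_uIcc)
  have hEac : AbsolutelyContinuousOnInterval (fun t => Real.exp (-α t)) x y := by
    refine absolutelyContinuousOnInterval_exp_neg
      (ha.absolutelyContinuousOnInterval_intervalIntegral left_mem_uIcc) fun t ht => ?_
    rw [uIcc_of_le hxy] at ht
    exact intervalIntegral.integral_nonneg ht.1 fun s _ => ha0 s
  have hw := (hVac.mul hEac).integral_deriv_eq_sub
  have hneg : ∫ t in x..y, deriv (V * fun t => Real.exp (-α t)) t ≤ 0 := by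
    rw [intervalIntegral.integral_of_le hxy]
    refine integral_nonpos_of_ae ?_
    refine (ae_restrict_iff' measurableSet_Ioc).2 ?_
    filter_upwards [hau.ae_hasDerivAt_integral, ha.ae_hasDerivAt_integral] with t h1 h2 ht
    have htI : t ∈ uIcc x y := by rw [uIcc_of_le hxy]; exact Ioc_subset_Icc_self ht
    have d1 : HasDerivAt V (a t * u t) t := (h1 htI x left_mem_uIcc).const_add c
    have d2 : HasDerivAt α (a t) t := h2 htI x left_mem_uIcc
    have d3 : HasDerivAt (fun t => Real.exp (-α t)) (Real.exp (-α t) * -a t) t := d2.neg.exp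
    rw [(d1.mul d3).deriv]
    have := mul_le_mul_of_nonneg_left (hu t (Ioc_subset_Icc_self ht)) (ha0 t)
    have h3 : a t * u t ≤ a t * V t := this
    have h4 := mul_le_mul_of_nonneg_right h3 (Real.exp_pos (-α t)).le
    simp only [Pi.zero_apply]
    linarith
  have hx : V x = c := by simp [hV]
  have hαx : α x = 0 := by simp [hα]
  simp only [Pi.mul_apply, hx, hαx, neg_zero, Real.exp_zero, mul_one] at hw
  rw [hw] at hneg
  have hfin : V y ≤ c * Real.exp (α y) := by
    have h := mul_le_mul_of_nonneg_right (sub_nonpos.1 hneg) (Real.exp_pos (α y)).le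
    rwa [mul_assoc, ← Real.exp_add, neg_add_cancel, Real.exp_zero, mul_one] at h
  exact (hu y (right_mem_Icc.2 hxy)).trans hfin

/-- Two-sided form of Grönwall's integral inequality; the backward case is the forward one after
the reflection `s ↦ -s`. -/
lemma gronwall_two_sided {a u : ℝ → ℝ} {x y c : ℝ}
    (ha : IntervalIntegrable a volume x y) (ha0 : ∀ s, 0 ≤ a s) (hu0 : ∀ s, 0 ≤ u s)
    (hau : IntervalIntegrable (fun s => a s * u s) volume x y)
    (hu : ∀ t ∈ uIcc x y, u t ≤ c + |∫ s in x..t, a s * u s|) :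
    u y ≤ c * Real.exp |∫ s in x..y, a s| := by
  rcases le_total x y with hxy | hyx
  · rw [abs_of_nonneg (intervalIntegral.integral_nonneg hxy fun s _ => ha0 s)]
    refine gronwall_forward hxy ha ha0 hau fun t ht => ?_
    have := hu t (by rwa [uIcc_of_le hxy])
    rwa [abs_of_nonneg (intervalIntegral.integral_nonneg ht.1
      fun s _ => mul_nonneg (ha0 s) (hu0 s))] at this
  · have hneg : -x ≤ -y := neg_le_neg hyx
    have h := gronwall_forward (a := fun s => a (-s)) (u := fun s => u (-s)) (c := c) hneg
      (by simpa using ha.comp_sub_left 0) (fun s => ha0 _)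
      (by simpa using hau.comp_sub_left 0) ?_
    · rw [intervalIntegral.integral_comp_neg, neg_neg, neg_neg] at h
      rwa [intervalIntegral.integral_symm, abs_neg,
        abs_of_nonneg (intervalIntegral.integral_nonneg hyx fun s _ => ha0 s)]
    · intro t ht
      have h1 := hu (-t) (by
        rw [uIcc_of_ge hyx]; exact ⟨by linarith [ht.2], by linarith [ht.1]⟩)
      rw [intervalIntegral.integral_comp_neg (fun s => a s * u s), neg_neg]
      rwa [intervalIntegral.integral_symm, abs_neg,
        abs_of_nonneg (intervalIntegral.integral_nonneg (by linarith [ht.1])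
          fun s _ => mul_nonneg (ha0 s) (hu0 s))] at h1

lemma abs_intervalIntegral_le_setIntegral {I : Set ℝ} (hI : I.OrdConnected) {f : ℝ → ℝ}
    (hf : IntegrableOn f I volume) (hf0 : ∀ s, 0 ≤ f s) {x y : ℝ} (hx : x ∈ I) (hy : y ∈ I) :
    |∫ s in x..y, f s| ≤ ∫ s in I, f s := by
  rw [intervalIntegral.abs_intervalIntegral_eq,
    abs_of_nonneg (setIntegral_nonneg measurableSet_uIoc fun s _ => hf0 s)]
  exact setIntegral_mono_set hf (Filter.Eventually.of_forall hf0)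
    (uIoc_subset_uIcc.trans (hI.uIcc_subset hx hy)).eventuallyLE

section Solution

variable {R : Type*} [NormedRing R] [NormedSpace ℝ R]
  {I : Set ℝ} {t0 : ℝ}

lemma continuousOn_of_integral_eq {A X : ℝ → R} (hI : I.OrdConnected) (ht0 : t0 ∈ I)
    (hAX : ∀ t ∈ I, IntervalIntegrable (fun s => A s * X s) volume t0 t)
    (hX : ∀ t ∈ I, X t = 1 + ∫ s in t0..t, A s * X s) {t : ℝ} (ht : t ∈ I) :
    ContinuousOn X (uIcc t0 t) := by
  have h : ContinuousOn (fun r => 1 + ∫ s in t0..r, A s * X s) (uIcc t0 t) :=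
    continuousOn_const.add
      (intervalIntegral.continuousOn_primitive_interval' (hAX t ht) left_mem_uIcc)
  exact h.congr fun r hr => hX r (hI.uIcc_subset ht0 ht hr)

lemma intervalIntegrable_of_mem {E : Type*} [NormedAddCommGroup E] {f : ℝ → E}
    (hI : I.OrdConnected) (ht0 : t0 ∈ I)
    (hf : IntegrableOn f I volume) {t : ℝ} (ht : t ∈ I) : IntervalIntegrable f volume t0 t :=
  (hf.mono_set (hI.uIcc_subset ht0 ht)).intervalIntegrable

/-- A solution of `X = 1 + ∫ A X` is bounded by `exp (∫_I ‖A‖)`. The hypothesis `‖1‖ ≤ 1` (rather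
than `‖1‖ = 1`) covers the zero ring, i.e. matrices of size `0`. -/
lemma norm_solution_le {A X : ℝ → R} (hone : ‖(1 : R)‖ ≤ 1) (hI : I.OrdConnected) (ht0 : t0 ∈ I)
    (hA : IntegrableOn A I volume)
    (hAX : ∀ t ∈ I, IntervalIntegrable (fun s => A s * X s) volume t0 t)
    (hX : ∀ t ∈ I, X t = 1 + ∫ s in t0..t, A s * X s) {t : ℝ} (ht : t ∈ I) :
    ‖X t‖ ≤ Real.exp (∫ s in I, ‖A s‖) := by
  have hint : ∀ t ∈ I, IntervalIntegrable (fun s => ‖A s‖ * ‖X s‖) volume t0 t := fun t ht =>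
    (intervalIntegrable_of_mem hI ht0 hA ht).norm.mul_continuousOn
      (continuousOn_of_integral_eq hI ht0 hAX hX ht).norm
  have h := gronwall_two_sided (c := 1) (intervalIntegrable_of_mem hI ht0 hA ht).norm
    (fun s => norm_nonneg (A s)) (fun s => norm_nonneg (X s)) (hint t ht) ?_
  · rw [one_mul] at h
    exact h.trans (Real.exp_le_exp.2
      (abs_intervalIntegral_le_setIntegral hI hA.norm (fun s => norm_nonneg _) ht0 ht))
  · intro r hr
    have hrI := hI.uIcc_subset ht0 ht hr
    rw [hX r hrI]
    refine (norm_add_le _ _).trans (add_le_add hone ?_)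
    exact intervalIntegral.norm_integral_le_abs_of_norm_le
      (Filter.Eventually.of_forall fun s => norm_mul_le (A s) (X s)) (hint r hrI)

/-- The sharper bound for the difference of two solutions, with a single factor `exp (∫_I ‖A₁‖)`. -/
lemma norm_solution_sub_le {A₁ A₂ X₁ X₂ : ℝ → R} (hone : ‖(1 : R)‖ ≤ 1)
    (hI : I.OrdConnected) (ht0 : t0 ∈ I)
    (hA₁ : IntegrableOn A₁ I volume) (hA₂ : IntegrableOn A₂ I volume)
    (hAX₁ : ∀ t ∈ I, IntervalIntegrable (fun s => A₁ s * X₁ s) volume t0 t)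
    (hAX₂ : ∀ t ∈ I, IntervalIntegrable (fun s => A₂ s * X₂ s) volume t0 t)
    (hX₁ : ∀ t ∈ I, X₁ t = 1 + ∫ s in t0..t, A₁ s * X₁ s)
    (hX₂ : ∀ t ∈ I, X₂ t = 1 + ∫ s in t0..t, A₂ s * X₂ s) {t : ℝ} (ht : t ∈ I) :
    ‖X₁ t - X₂ t‖ ≤ Real.exp ((∫ s in I, ‖A₁ s‖) + ∫ s in I, ‖A₂ s‖) *
      ∫ s in I, ‖A₁ s - A₂ s‖ := by
  have hB : IntegrableOn (fun s => A₁ s - A₂ s) I volume := hA₁.sub hA₂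
  have hc₁ := fun t (ht : t ∈ I) => continuousOn_of_integral_eq hI ht0 hAX₁ hX₁ ht
  have hc₂ := fun t (ht : t ∈ I) => continuousOn_of_integral_eq hI ht0 hAX₂ hX₂ ht
  have hint : ∀ t ∈ I, IntervalIntegrable (fun s => ‖A₁ s‖ * ‖X₁ s - X₂ s‖) volume t0 t :=
    fun t ht => (intervalIntegrable_of_mem hI ht0 hA₁ ht).norm.mul_continuousOn
      ((hc₁ t ht).sub (hc₂ t ht)).norm
  set C := Real.exp (∫ s in I, ‖A₂ s‖) with hC
  set J := ∫ s in I, ‖A₁ s - A₂ s‖ with hJ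
  have hJ0 : 0 ≤ J := integral_nonneg fun s => norm_nonneg _
  have hBi : ∀ t ∈ I, IntervalIntegrable (fun s => C * ‖A₁ s - A₂ s‖) volume t0 t :=
    fun t ht => (intervalIntegrable_of_mem hI ht0 hB ht).norm.const_mul C
  have h := gronwall_two_sided (c := C * J) (intervalIntegrable_of_mem hI ht0 hA₁ ht).norm
    (fun s => norm_nonneg (A₁ s)) (fun s => norm_nonneg (X₁ s - X₂ s)) (hint t ht) ?_
  · refine h.trans ?_
    have h1 := Real.exp_le_exp.2
      (abs_intervalIntegral_le_setIntegral hI hA₁.norm (fun s => norm_nonneg _) ht0 ht)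
    calc C * J * Real.exp |∫ s in t0..t, ‖A₁ s‖|
        ≤ C * J * Real.exp (∫ s in I, ‖A₁ s‖) := by gcongr
      _ = _ := by rw [Real.exp_add]; ring
  · intro r hr
    have hrI := hI.uIcc_subset ht0 ht hr
    have hD : X₁ r - X₂ r = ∫ s in t0..r, (A₁ s * X₁ s - A₂ s * X₂ s) := by
      rw [intervalIntegral.integral_sub (hAX₁ r hrI) (hAX₂ r hrI), hX₁ r hrI, hX₂ r hrI]
      abel
    have hpt : ∀ s ∈ uIoc t0 r, ‖A₁ s * X₁ s - A₂ s * X₂ s‖ ≤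
        C * ‖A₁ s - A₂ s‖ + ‖A₁ s‖ * ‖X₁ s - X₂ s‖ := by
      intro s hs
      have hsI := hI.uIcc_subset ht0 hrI (uIoc_subset_uIcc hs)
      have hX₂s : ‖X₂ s‖ ≤ C := norm_solution_le hone hI ht0 hA₂ hAX₂ hX₂ hsI
      have he : A₁ s * X₁ s - A₂ s * X₂ s = (A₁ s - A₂ s) * X₂ s + A₁ s * (X₁ s - X₂ s) := by
        noncomm_ring
      rw [he]
      refine (norm_add_le _ _).trans (add_le_add ((norm_mul_le _ _).trans ?_) (norm_mul_le _ _))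
      rw [mul_comm]
      gcongr
    have h1 := intervalIntegral.norm_integral_le_abs_of_norm_le
      ((ae_restrict_iff' measurableSet_uIoc).2 (Filter.Eventually.of_forall hpt))
      ((hBi r hrI).add (hint r hrI))
    rw [intervalIntegral.integral_add (hBi r hrI) (hint r hrI),
      intervalIntegral.integral_const_mul, ← hD] at h1
    refine h1.trans ((abs_add_le _ _).trans ?_)
    gcongr
    rw [abs_mul, abs_of_pos (Real.exp_pos _)]
    gcongr
    exact abs_intervalIntegral_le_setIntegral hI hB.norm (fun s => norm_nonneg _) ht0 hrI

end Solution

/-- `‖X(t,μ₁) − X(t,μ₂)‖ ≤ e^{2n̂(μ₁)+n̂(μ₂)} ∫_I ‖A(s,μ₁) − A(s,μ₂)‖ ds`,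
and in particular, if `n̂(μ) ≤ K` for all `μ`, the bound `e^{3K} ∫_I ‖A(s,μ₁) − A(s,μ₂)‖ ds`. -/
theorem fundamental_matrix_difference_norm_le (n m : ℕ)
    (I : Set ℝ) (hIopen : IsOpen I) (hIord : I.OrdConnected)
    (t0 : ℝ) (ht0 : t0 ∈ I)
    (M : Set (EuclideanSpace ℝ (Fin m))) (hMopen : IsOpen M) (hMconn : IsConnected M)
    (A X : ℝ → EuclideanSpace ℝ (Fin m) →
      (EuclideanSpace ℝ (Fin n) →L[ℝ] EuclideanSpace ℝ (Fin n)))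
    (hA : ∀ μ ∈ M, IntegrableOn (fun t => A t μ) I volume)
    (hAX : ∀ μ ∈ M, ∀ t ∈ I, IntervalIntegrable (fun s => A s μ * X s μ) volume t0 t)
    (hX : ∀ μ ∈ M, ∀ t ∈ I, X t μ = 1 + ∫ s in t0..t, A s μ * X s μ)
    (hinv : ∀ t ∈ I, ∀ μ ∈ M, IsUnit (X t μ)) :
    (∀ t ∈ I, ∀ μ1 ∈ M, ∀ μ2 ∈ M,
      ‖X t μ1 - X t μ2‖ ≤
        Real.exp (2 * (∫ s in I, ‖A s μ1‖) + (∫ s in I, ‖A s μ2‖)) *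
          ∫ s in I, ‖A s μ1 - A s μ2‖) ∧
    (∀ K : ℝ, (∀ μ ∈ M, (∫ s in I, ‖A s μ‖) ≤ K) →
      ∀ t ∈ I, ∀ μ1 ∈ M, ∀ μ2 ∈ M,
        ‖X t μ1 - X t μ2‖ ≤ Real.exp (3 * K) * ∫ s in I, ‖A s μ1 - A s μ2‖) := by
  have hone : ‖(1 : EuclideanSpace ℝ (Fin n) →L[ℝ] EuclideanSpace ℝ (Fin n))‖ ≤ 1 :=
    ContinuousLinearMap.norm_id_le
  have main : ∀ t ∈ I, ∀ μ1 ∈ M, ∀ μ2 ∈ M,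
      ‖X t μ1 - X t μ2‖ ≤
        Real.exp (2 * (∫ s in I, ‖A s μ1‖) + (∫ s in I, ‖A s μ2‖)) *
          ∫ s in I, ‖A s μ1 - A s μ2‖ := by
    intro t ht μ1 h1 μ2 h2
    refine (norm_solution_sub_le hone hIord ht0 (hA μ1 h1) (hA μ2 h2) (hAX μ1 h1) (hAX μ2 h2)
      (hX μ1 h1) (hX μ2 h2) ht).trans ?_
    have hn : 0 ≤ ∫ s in I, ‖A s μ1‖ := integral_nonneg fun s => norm_nonneg _
    refine mul_le_mul_of_nonneg_right (Real.exp_le_exp.2 (by linarith))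
      (integral_nonneg fun s => norm_nonneg _)
  refine ⟨main, fun K hK t ht μ1 h1 μ2 h2 => (main t ht μ1 h1 μ2 h2).trans ?_⟩
  exact mul_le_mul_of_nonneg_right (Real.exp_le_exp.2 (by linarith [hK μ1 h1, hK μ2 h2]))
    (integral_nonneg fun s => norm_nonneg _)
end

section
/- Assume X(t,μ) is invertible for every t ∈ I and μ ∈ M. Then for all t ∈ I and all μ1, μ2 ∈ M, ‖X(t,μ1)^{-1} − X(t,μ2)^{-1}‖ ≤ e^{2n̂(μ1) + n̂(μ2)} ∫_I ‖A(s,μ1) − A(s,μ2)‖ ds, where n̂(μ) = ∫_I ‖A(s,μ)‖ ds. -/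
/-!
Write `Yᵢ = X(t,μᵢ)⁻¹` at the fixed time `t`, and follow the solutions `xᵢ(s) = X(s,μᵢ) Yᵢ`, which
both equal `1` at time `t`. Since `X(t₀,μᵢ) = 1`, they satisfy `xᵢ(t₀) = Yᵢ`, so the difference of
the inverses is the value at `t₀` of `d = x₁ - x₂`, which vanishes at `t` and solves
`d' = A₂ d + (A₁ - A₂) x₁`. Grönwall's inequality, applied from `t` towards `t₀`, gives
`‖x₁‖ ≤ exp n̂(μ₁)` and then `‖Y₁ - Y₂‖ ≤ exp (n̂(μ₁) + n̂(μ₂)) ∫ ‖A₁ - A₂‖`, which is slightly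
better than the claim. In this way no differential equation for `X⁻¹` is needed.

The coefficients are only integrable, so Grönwall's inequality is needed in its integral form with
an `L¹` kernel (`gronwall_of_le`). It follows from
`∫ₚ^q a(s) exp(∫ₚˢ a) ds ≤ exp(∫ₚ^q a) - 1` by a first-crossing argument.
-/

open MeasureTheory Set

/-- The integrand is a.e. the derivative of the monotone function `s ↦ exp (∫ₚˢ a)`, and the
integral of the derivative of a monotone function is at most its increment. -/
lemma integral_mul_exp_le {a : ℝ → ℝ} {p q : ℝ} (hpq : p ≤ q) (ha0 : ∀ s, 0 ≤ a s)
    (ha : IntervalIntegrable a volume p q) :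
    ∫ s in p..q, a s * Real.exp (∫ r in p..s, a r) ≤ Real.exp (∫ r in p..q, a r) - 1 := by
  set E : ℝ → ℝ := fun s => Real.exp (∫ r in p..s, a r) with hE
  have hmono : MonotoneOn E (uIcc p q) := by
    intro x hx y hy hxy
    rw [uIcc_of_le hpq] at hx hy
    refine Real.exp_le_exp.2 ?_
    refine intervalIntegral.integral_mono_interval le_rfl hx.1 hxy
      (Filter.Eventually.of_forall ha0) (ha.mono_set ?_)
    rw [uIcc_of_le hpq, uIcc_of_le hy.1]
    exact Icc_subset_Icc_right hy.2
  have h1 := hmono.intervalIntegral_deriv_mem_uIcc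
  have h2 : E p ≤ E q := hmono left_mem_uIcc right_mem_uIcc hpq
  rw [uIcc_of_le (by linarith)] at h1
  have h3 : ∫ s in p..q, deriv E s = ∫ s in p..q, a s * E s := by
    refine intervalIntegral.integral_congr_ae ?_
    filter_upwards [ha.ae_hasDerivAt_integral] with s hs hs'
    have := (hs (uIoc_subset_uIcc hs') p left_mem_uIcc).exp.deriv
    rw [hE, this, mul_comm]
  have h4 : E p = 1 := by simp [hE]
  rw [h3, h4] at h1
  exact h1.2

/-- Grönwall's inequality in integral form with an `L¹` kernel; the function `u` need not be
continuous. -/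
lemma gronwall_of_le {a u : ℝ → ℝ} {p q c : ℝ} (hpq : p ≤ q) (hc : 0 ≤ c) (ha0 : ∀ s, 0 ≤ a s)
    (ha : IntervalIntegrable a volume p q)
    (hau : IntervalIntegrable (fun s => a s * u s) volume p q)
    (hu : ∀ s ∈ Icc p q, u s ≤ c + ∫ r in p..s, a r * u r) :
    u q ≤ c * Real.exp (∫ r in p..q, a r) := by
  set F : ℝ → ℝ := fun s => c + ∫ r in p..s, a r * u r with hF
  set E : ℝ → ℝ := fun s => Real.exp (∫ r in p..s, a r) with hE
  have hFc : ContinuousOn F (Icc p q) := by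
    rw [← uIcc_of_le hpq]
    exact continuousOn_const.add
      (intervalIntegral.continuousOn_primitive_interval' hau left_mem_uIcc)
  have hEc : ContinuousOn E (Icc p q) := by
    rw [← uIcc_of_le hpq]
    exact (intervalIntegral.continuousOn_primitive_interval' ha left_mem_uIcc).rexp
  -- With a strictly larger constant `C` the bound is strict, so it cannot fail for a first time.
  have key : ∀ C, c < C → ∀ s ∈ Icc p q, F s < C * E s := by
    intro C hC
    by_contra! hcon
    set S : Set ℝ := Icc p q ∩ {s | C * E s ≤ F s} with hS
    have hSne : S.Nonempty := hcon
    have hSc : IsClosed S :=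
      isClosed_Icc.isClosed_le (continuousOn_const.mul hEc) hFc
    have hSb : BddBelow S := ⟨p, fun s hs => hs.1.1⟩
    obtain ⟨⟨hz1, hz2⟩, hz3⟩ := hSc.csInf_mem hSne hSb
    set z := sInf S
    have hlt : ∀ r ∈ Ioo p z, F r ≤ C * E r := by
      intro r hr
      by_contra! h
      exact absurd (csInf_le hSb (⟨⟨hr.1.le, hr.2.le.trans hz2⟩, h.le⟩ : r ∈ S)) (not_le.2 hr.2)
    have hsub : uIcc p z ⊆ uIcc p q := by
      rw [uIcc_of_le hz1, uIcc_of_le hpq]; exact Icc_subset_Icc_right hz2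
    have haz := ha.mono_set hsub
    have hEz : IntervalIntegrable (fun s => a s * E s) volume p z := by
      refine haz.mul_continuousOn (hEc.mono ?_)
      rwa [← uIcc_of_le hpq]
    have h1 : ∫ r in p..z, a r * u r ≤ ∫ r in p..z, C * (a r * E r) := by
      refine intervalIntegral.integral_mono_on_of_le_Ioo hz1 (hau.mono_set hsub)
        (hEz.const_mul C) ?_
      intro r hr
      have h := (hu r ⟨hr.1.le, hr.2.le.trans hz2⟩).trans (hlt r hr)
      nlinarith [mul_le_mul_of_nonneg_left h (ha0 r)]
    have h2 := integral_mul_exp_le hz1 ha0 haz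
    rw [intervalIntegral.integral_const_mul] at h1
    have h3 : C * E z ≤ c + ∫ r in p..z, a r * u r := hz3
    have h4 := mul_le_mul_of_nonneg_left h2 (hc.trans hC.le)
    have h5 : C * ∫ r in p..z, a r * E r ≤ C * (E z - 1) := h4
    linarith
  have hq : q ∈ Icc p q := ⟨hpq, le_rfl⟩
  refine (hu q hq).trans (le_of_forall_pos_le_add fun ε hε => ?_)
  have hEpos : 0 < E q := Real.exp_pos _
  have := (key (c + ε / E q) (by have := div_pos hε hEpos; linarith) q hq).le
  rwa [add_mul, div_mul_cancel₀ _ hEpos.ne'] at this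

/-- Grönwall's inequality from `p` towards `q`, in either direction of time. -/
lemma gronwall_abs {a u : ℝ → ℝ} {p q c : ℝ} (hc : 0 ≤ c) (ha0 : ∀ s, 0 ≤ a s)
    (hu0 : ∀ s, 0 ≤ u s)
    (ha : IntervalIntegrable a volume p q)
    (hau : IntervalIntegrable (fun s => a s * u s) volume p q)
    (hu : ∀ s ∈ uIcc p q, u s ≤ c + |∫ r in p..s, a r * u r|) :
    u q ≤ c * Real.exp |∫ r in p..q, a r| := by
  rcases le_total p q with hpq | hpq
  · rw [abs_of_nonneg (intervalIntegral.integral_nonneg hpq fun s _ => ha0 s)]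
    refine gronwall_of_le hpq hc ha0 ha hau fun s hs => ?_
    have h := hu s (by rwa [uIcc_of_le hpq])
    rwa [abs_of_nonneg (intervalIntegral.integral_nonneg hs.1
      fun r _ => mul_nonneg (ha0 r) (hu0 r))] at h
  · -- Reflect time.
    have e1 : ∫ r in (-p)..(-q), a (-r) = |∫ r in p..q, a r| := by
      rw [intervalIntegral.integral_comp_neg, neg_neg, neg_neg, intervalIntegral.integral_symm q p,
        abs_neg, abs_of_nonneg (intervalIntegral.integral_nonneg hpq fun s _ => ha0 s)]
    have h := gronwall_of_le (a := fun s => a (-s)) (u := fun s => u (-s)) (p := -p) (q := -q)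
      (c := c) (neg_le_neg hpq) hc (fun s => ha0 _) ((IntervalIntegrable.iff_comp_neg).1 ha)
      ((IntervalIntegrable.iff_comp_neg).1 hau) ?_
    · rw [e1, neg_neg] at h
      exact h
    · intro s hs
      have hs' : -s ∈ uIcc p q := by
        rw [uIcc_of_ge hpq]; exact ⟨by linarith [hs.2], by linarith [hs.1]⟩
      refine (hu _ hs').trans_eq ?_
      rw [intervalIntegral.integral_comp_neg (fun r => a r * u r), neg_neg,
        intervalIntegral.integral_symm, abs_neg, abs_of_nonneg]
      exact intervalIntegral.integral_nonneg (by linarith [hs.1])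
        fun r _ => mul_nonneg (ha0 r) (hu0 r)

/-- A priori bound for the inhomogeneous linear equation `x' = B x + g`, `x(p) = x₀`, in
integrated form. -/
lemma norm_le_of_linear_eq {R : Type*} [NormedRing R] [NormedAlgebra ℝ R]
    {B x g : ℝ → R} {x0 : R} {p q : ℝ}
    (hB : IntervalIntegrable B volume p q) (hg : IntervalIntegrable g volume p q)
    (hx : ContinuousOn x (uIcc p q))
    (heq : ∀ s ∈ uIcc p q, x s = x0 + ∫ r in p..s, (B r * x r + g r)) :
    ‖x q‖ ≤ (‖x0‖ + |∫ r in p..q, ‖g r‖|) * Real.exp |∫ r in p..q, ‖B r‖| := by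
  have hBx : IntervalIntegrable (fun s => B s * x s) volume p q := hB.mul_continuousOn hx
  have hBxn : IntervalIntegrable (fun s => ‖B s‖ * ‖x s‖) volume p q :=
    hB.norm.mul_continuousOn hx.norm
  refine gronwall_abs (a := fun r => ‖B r‖) (u := fun r => ‖x r‖) (by positivity)
    (fun _ => norm_nonneg _) (fun _ => norm_nonneg _) hB.norm hBxn ?_
  intro s hs
  have hsub : uIcc p s ⊆ uIcc p q := uIcc_subset_uIcc_left hs
  have hsub' : uIoc p s ⊆ uIoc p q := by
    rcases le_total p q with h | h
    · rw [uIcc_of_le h] at hs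
      rw [uIoc_of_le h, uIoc_of_le hs.1]; exact Ioc_subset_Ioc_right hs.2
    · rw [uIcc_of_ge h] at hs
      rw [uIoc_of_ge h, uIoc_of_ge hs.2]; exact Ioc_subset_Ioc_left hs.1
  have h1 : ‖∫ r in p..s, g r‖ ≤ |∫ r in p..q, ‖g r‖| :=
    intervalIntegral.norm_integral_le_abs_integral_norm.trans
      (intervalIntegral.abs_integral_mono_interval hsub'
        (Filter.Eventually.of_forall fun _ => norm_nonneg _) hg.norm)
  have h2 : ‖∫ r in p..s, B r * x r‖ ≤ |∫ r in p..s, ‖B r‖ * ‖x r‖| :=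
    intervalIntegral.norm_integral_le_abs_of_norm_le
      (Filter.Eventually.of_forall fun r => norm_mul_le _ _) (hBxn.mono_set hsub)
  rw [heq s hs, intervalIntegral.integral_add (hBx.mono_set hsub) (hg.mono_set hsub)]
  refine (norm_add_le _ _).trans ?_
  linarith [norm_add_le (∫ r in p..s, B r * x r) (∫ r in p..s, g r)]

lemma integral_mul_const_right {R : Type*} [NormedRing R] [NormedAlgebra ℝ R] [CompleteSpace R]
    {f : ℝ → R} {p q : ℝ} (hf : IntervalIntegrable f volume p q) (c : R) :
    ∫ s in p..q, f s * c = (∫ s in p..q, f s) * c :=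
  ((ContinuousLinearMap.mul ℝ R).flip c).intervalIntegral_comp_comm hf

/-- An interval integral of a nonnegative function between points of `I`, taken in absolute value,
is at most the integral over `I`. -/
lemma abs_integral_le_setIntegral {I : Set ℝ} (hIord : I.OrdConnected)
    {f : ℝ → ℝ} (hf0 : ∀ s, 0 ≤ f s) (hf : IntegrableOn f I volume) {p q : ℝ} (hp : p ∈ I)
    (hq : q ∈ I) : |∫ s in p..q, f s| ≤ ∫ s in I, f s := by
  rw [intervalIntegral.abs_integral_eq_abs_integral_uIoc,
    abs_of_nonneg (setIntegral_nonneg measurableSet_uIoc fun s _ => hf0 s)]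
  exact setIntegral_mono_set hf (Filter.Eventually.of_forall hf0)
    (uIoc_subset_uIcc.trans (hIord.uIcc_subset hp hq)).eventuallyLE

/-- `‖X(t,μ₁)⁻¹ − X(t,μ₂)⁻¹‖ ≤
e^{2n̂(μ₁)+n̂(μ₂)} ∫_I ‖A(s,μ₁) − A(s,μ₂)‖ ds`. -/
theorem fundamental_matrix_inv_difference_norm_le (n m : ℕ)
    (I : Set ℝ) (hIopen : IsOpen I) (hIord : I.OrdConnected)
    (t0 : ℝ) (ht0 : t0 ∈ I)
    (M : Set (EuclideanSpace ℝ (Fin m))) (hMopen : IsOpen M) (hMconn : IsConnected M)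
    (A X : ℝ → EuclideanSpace ℝ (Fin m) →
      (EuclideanSpace ℝ (Fin n) →L[ℝ] EuclideanSpace ℝ (Fin n)))
    (hA : ∀ μ ∈ M, IntegrableOn (fun t => A t μ) I volume)
    (hAX : ∀ μ ∈ M, ∀ t ∈ I, IntervalIntegrable (fun s => A s μ * X s μ) volume t0 t)
    (hX : ∀ μ ∈ M, ∀ t ∈ I, X t μ = 1 + ∫ s in t0..t, A s μ * X s μ)
    (hinv : ∀ t ∈ I, ∀ μ ∈ M, IsUnit (X t μ)) :
    ∀ t ∈ I, ∀ μ1 ∈ M, ∀ μ2 ∈ M,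
      ‖Ring.inverse (X t μ1) - Ring.inverse (X t μ2)‖ ≤
        Real.exp (2 * (∫ s in I, ‖A s μ1‖) + (∫ s in I, ‖A s μ2‖)) *
          ∫ s in I, ‖A s μ1 - A s μ2‖ := by
  intro t ht μ1 hμ1 μ2 hμ2
  have hJ : uIcc t t0 ⊆ I := hIord.uIcc_subset ht ht0
  have hAint : ∀ μ ∈ M, ∀ p ∈ I, ∀ q ∈ I, IntervalIntegrable (fun s => A s μ) volume p q :=
    fun μ hμ p hp q hq => ((hA μ hμ).mono_set (hIord.uIcc_subset hp hq)).intervalIntegrable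
  have hX0 : ∀ μ ∈ M, X t0 μ = 1 := fun μ hμ => by simpa using hX μ hμ t0 ht0
  set x : EuclideanSpace ℝ (Fin m) → ℝ →
      (EuclideanSpace ℝ (Fin n) →L[ℝ] EuclideanSpace ℝ (Fin n)) :=
    fun μ s => X s μ * Ring.inverse (X t μ) with hx
  have hxc : ∀ μ ∈ M, ContinuousOn (x μ) (uIcc t t0) := by
    intro μ hμ
    refine ContinuousOn.mul ?_ continuousOn_const
    have h : ContinuousOn (fun s => 1 + ∫ r in t0..s, A r μ * X r μ) (uIcc t t0) :=
      continuousOn_const.add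
        (intervalIntegral.continuousOn_primitive_interval' (hAX μ hμ t ht).symm right_mem_uIcc)
    exact h.congr fun s hs => hX μ hμ s (hJ hs)
  have hxeq : ∀ μ ∈ M, ∀ s ∈ uIcc t t0, x μ s = 1 + ∫ r in t..s, A r μ * x μ r := by
    intro μ hμ s hs
    have h1 : ∫ r in t..s, A r μ * X r μ = X s μ - X t μ := by
      rw [hX μ hμ s (hJ hs), hX μ hμ t ht,
        ← intervalIntegral.integral_interval_sub_left (hAX μ hμ s (hJ hs)) (hAX μ hμ t ht)]
      abel
    have h2 : ∫ r in t..s, A r μ * x μ r = (X s μ - X t μ) * Ring.inverse (X t μ) := by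
      rw [← h1, ← integral_mul_const_right ((hAX μ hμ t ht).symm.trans (hAX μ hμ s (hJ hs)))]
      simp only [hx, mul_assoc]
    rw [h2, sub_mul, Ring.mul_inverse_cancel _ (hinv t ht μ hμ)]
    simp [hx]
  have hone : ‖(1 : EuclideanSpace ℝ (Fin n) →L[ℝ] EuclideanSpace ℝ (Fin n))‖ ≤ 1 :=
    ContinuousLinearMap.norm_id_le
  set N1 := ∫ s in I, ‖A s μ1‖ with hN1
  set N2 := ∫ s in I, ‖A s μ2‖ with hN2
  set D := ∫ s in I, ‖A s μ1 - A s μ2‖ with hD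
  have hN1nn : 0 ≤ N1 := integral_nonneg fun _ => norm_nonneg _
  have hDnn : 0 ≤ D := integral_nonneg fun _ => norm_nonneg _
  have hx1 : ∀ s ∈ uIcc t t0, ‖x μ1 s‖ ≤ Real.exp N1 := by
    intro s hs
    have hsub : uIcc t s ⊆ uIcc t t0 := uIcc_subset_uIcc_left hs
    have h := norm_le_of_linear_eq (B := fun r => A r μ1) (x := x μ1) (g := fun _ => 0) (x0 := 1)
      (hAint μ1 hμ1 t ht s (hJ hs)) (by simp) ((hxc μ1 hμ1).mono hsub)
      (fun r hr => by simpa using hxeq μ1 hμ1 r (hsub hr))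
    have h' := abs_integral_le_setIntegral hIord (fun s => norm_nonneg (A s μ1))
      (hA μ1 hμ1).norm ht (hJ hs)
    simp only [norm_zero, intervalIntegral.integral_zero, abs_zero, add_zero] at h
    calc _ ≤ _ := h
      _ ≤ 1 * Real.exp N1 := by gcongr
      _ = _ := one_mul _
  have hAd : IntervalIntegrable (fun s => A s μ1 - A s μ2) volume t t0 :=
    (hAint μ1 hμ1 t ht t0 ht0).sub (hAint μ2 hμ2 t ht t0 ht0)
  have hg : IntervalIntegrable (fun s => (A s μ1 - A s μ2) * x μ1 s) volume t t0 :=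
    hAd.mul_continuousOn (hxc μ1 hμ1)
  have hd := norm_le_of_linear_eq (B := fun r => A r μ2) (x := fun s => x μ1 s - x μ2 s)
    (g := fun s => (A s μ1 - A s μ2) * x μ1 s) (x0 := 0)
    (hAint μ2 hμ2 t ht t0 ht0) hg ((hxc μ1 hμ1).sub (hxc μ2 hμ2)) (by
      intro s hs
      have hsub : uIcc t s ⊆ uIcc t t0 := uIcc_subset_uIcc_left hs
      have i1 := ((hAint μ1 hμ1 t ht t0 ht0).mul_continuousOn (hxc μ1 hμ1)).mono_set hsub
      have i2 := ((hAint μ2 hμ2 t ht t0 ht0).mul_continuousOn (hxc μ2 hμ2)).mono_set hsub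
      rw [hxeq μ1 hμ1 s hs, hxeq μ2 hμ2 s hs, add_sub_add_left_eq_sub,
        ← intervalIntegral.integral_sub i1 i2, zero_add]
      congr 1
      ext1 r
      rw [mul_sub, sub_mul]
      abel)
  have hgD : |∫ s in t..t0, ‖(A s μ1 - A s μ2) * x μ1 s‖| ≤ D * Real.exp N1 := by
    have h1 : |∫ s in t..t0, ‖(A s μ1 - A s μ2) * x μ1 s‖|
        ≤ |∫ s in t..t0, ‖A s μ1 - A s μ2‖ * Real.exp N1| := by
      rw [← Real.norm_eq_abs]
      refine intervalIntegral.norm_integral_le_abs_of_norm_le ?_ (hAd.norm.mul_const _)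
      refine (ae_restrict_iff' measurableSet_uIoc).2 (Filter.Eventually.of_forall fun s hs => ?_)
      rw [norm_norm]
      exact (norm_mul_le _ _).trans
        (mul_le_mul_of_nonneg_left (hx1 s (uIoc_subset_uIcc hs)) (norm_nonneg _))
    refine h1.trans ?_
    rw [intervalIntegral.integral_mul_const, abs_mul, abs_of_pos (Real.exp_pos N1)]
    gcongr
    exact abs_integral_le_setIntegral hIord (fun s => norm_nonneg (A s μ1 - A s μ2))
      ((hA μ1 hμ1).sub (hA μ2 hμ2)).norm ht ht0
  have hN2' := abs_integral_le_setIntegral hIord (fun s => norm_nonneg (A s μ2))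
      (hA μ2 hμ2).norm ht ht0
  have hval : ∀ μ ∈ M, x μ t0 = Ring.inverse (X t μ) := fun μ hμ => by simp [hx, hX0 μ hμ]
  simp only [hval μ1 hμ1, hval μ2 hμ2, norm_zero, zero_add] at hd
  calc _ ≤ _ := hd
    _ ≤ (D * Real.exp N1) * Real.exp N2 := by gcongr
    _ = Real.exp (N1 + N2) * D := by rw [Real.exp_add]; ring
    _ ≤ Real.exp (2 * N1 + N2) * D := by gcongr; linarith
end

section
/- Assume X(t,μ) is invertible for every t ∈ I and μ ∈ M, and let C(t,s,μ) = X(t,μ) X(s,μ)^{-1}. Then for all t, s ∈ I and all μ1, μ2 ∈ M, ‖C(t,s,μ1) − C(t,s,μ2)‖ ≤ e^{2n̂(μ1) + n̂(μ2)} (e^{n̂(μ1)} + e^{n̂(μ2)}) ∫_I ‖A(r,μ1) − A(r,μ2)‖ dr, where n̂(μ) = ∫_I ‖A(r,μ)‖ dr. In particular, if n̂(μ) ≤ K for all μ, then ‖C(t,s,μ1) − C(t,s,μ2)‖ ≤ 2 e^{4K} ∫_I ‖A(r,μ1) − A(r,μ2)‖ dr. -/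
open MeasureTheory Set

/-!
With `s` fixed, `C(t) = X(t) X(s)⁻¹` solves `C(t) = 1 + ∫_s^t A C`, so Grönwall's inequality gives
`‖C(t)‖ ≤ e^{n̂}`. The difference `D = C₁ - C₂` of two Cauchy matrices satisfies
`D(t) = ∫_s^t (A₁ D + (A₁ - A₂) C₂)`, and a second application of Grönwall yields
`‖D(t)‖ ≤ e^{n̂(μ₁) + n̂(μ₂)} ∫_I ‖A₁ - A₂‖` (`norm_cauchy_sub_le`), which is sharper than both claimed
bounds. As `A` is only integrable in time, Grönwall's inequality is needed for integrable kernels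
(`gronwall_aux`, `gronwall_uIoc`).
-/

open Filter Topology

/-- Grönwall inequality with an integrable (not necessarily continuous) kernel `a`, for `s ≤ t`.
The majorant `φ τ = c + ε + ∫ r in s..τ, a r * u r` is only absolutely continuous,
so the bound `φ τ ≤ (c + ε) * exp ((1 + ε) * ∫ r in s..τ, a r)` is propagated to the right by
continuous induction on `[s, t]`, and then `ε → 0`. -/
theorem gronwall_aux {s t c : ℝ} {a u : ℝ → ℝ} (hst : s ≤ t) (ha : IntervalIntegrable a volume s t)
    (ha0 : ∀ r, 0 ≤ a r) (hu : ContinuousOn u (Icc s t)) (hu0 : ∀ r, 0 ≤ u r) (hc : 0 ≤ c)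
    (h : ∀ τ ∈ Icc s t, u τ ≤ c + ∫ r in s..τ, a r * u r) :
    u t ≤ c * Real.exp (∫ r in s..t, a r) := by
  have hau : IntervalIntegrable (fun r => a r * u r) volume s t :=
    ha.mul_continuousOn (by rwa [uIcc_of_le hst])
  have hsub : ∀ {f : ℝ → ℝ} {x y : ℝ}, IntervalIntegrable f volume s t → s ≤ x → x ≤ y → y ≤ t →
      IntervalIntegrable f volume x y := fun hf h1 h2 h3 =>
    hf.mono_set (by rw [uIcc_of_le h2, uIcc_of_le hst]; exact Icc_subset_Icc h1 h3)
  have key : ∀ ε : ℝ, 0 < ε → u t ≤ (c + ε) * Real.exp ((1 + ε) * ∫ r in s..t, a r) := by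
    intro ε hε
    set φ : ℝ → ℝ := fun τ => c + ε + ∫ r in s..τ, a r * u r with hφ
    set α : ℝ → ℝ := fun τ => ∫ r in s..τ, a r with hα
    have hφc : ContinuousOn φ (Icc s t) := by
      have := intervalIntegral.continuousOn_primitive_interval' hau left_mem_uIcc
      rw [uIcc_of_le hst] at this
      exact continuousOn_const.add this
    have hαc : ContinuousOn α (Icc s t) := by
      have := intervalIntegral.continuousOn_primitive_interval' ha left_mem_uIcc
      rwa [uIcc_of_le hst] at this
    have hφadd : ∀ x y, s ≤ x → x ≤ y → y ≤ t → φ y = φ x + ∫ r in x..y, a r * u r := by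
      intro x y h1 h2 h3
      simp only [hφ]
      rw [← intervalIntegral.integral_add_adjacent_intervals (hsub hau le_rfl h1 (h2.trans h3))
        (hsub hau h1 h2 h3)]
      ring
    have hαadd : ∀ x y, s ≤ x → x ≤ y → y ≤ t → α y = α x + ∫ r in x..y, a r := by
      intro x y h1 h2 h3
      simp only [hα]
      rw [← intervalIntegral.integral_add_adjacent_intervals (hsub ha le_rfl h1 (h2.trans h3))
        (hsub ha h1 h2 h3)]
    have hφmono : ∀ x y, s ≤ x → x ≤ y → y ≤ t → φ x ≤ φ y := by
      intro x y h1 h2 h3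
      rw [hφadd x y h1 h2 h3]
      have := intervalIntegral.integral_nonneg (μ := volume) h2
        (fun r _ => mul_nonneg (ha0 r) (hu0 r))
      linarith
    have hφs : φ s = c + ε := by simp [hφ]
    have hφpos : ∀ x ∈ Icc s t, 0 < φ x := by
      intro x hx
      have := hφmono s x le_rfl hx.1 hx.2
      linarith
    have huφ : ∀ x ∈ Icc s t, u x ≤ φ x := by
      intro x hx
      have := h x hx
      simp only [hφ]; linarith
    have hall : Icc s t ⊆ {τ | φ τ ≤ (c + ε) * Real.exp ((1 + ε) * α τ)} := by
      apply IsClosed.Icc_subset_of_forall_exists_gt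
      · have : IsClosed {τ | τ ∈ Icc s t ∧ φ τ ≤ (c + ε) * Real.exp ((1 + ε) * α τ)} :=
          isClosed_Icc.isClosed_le hφc (by fun_prop)
        convert this using 1
        ext; simp [and_comm]
      · simp [hα, hφs]
      · rintro x ⟨hxS, hxs, hxt⟩ y hy
        -- Just to the right of `x`, continuity keeps `φ` below `(1 + ε) * φ x`; this is what the
        -- slack `1 + ε` in the exponent pays for.
        have hlt : φ x < (1 + ε) * φ x := by
          nlinarith [hφpos x ⟨hxs, hxt.le⟩]
        have hev : ∀ᶠ z in 𝓝[>] x, φ z < (1 + ε) * φ x := by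
          have h1 : Tendsto φ (𝓝[Icc s t] x) (𝓝 (φ x)) := hφc x ⟨hxs, hxt.le⟩
          have h2 : 𝓝[>] x ≤ 𝓝[Icc s t] x := by
            rw [← nhdsWithin_Ioc_eq_nhdsGT hxt]
            exact nhdsWithin_mono _ fun z hz => ⟨hxs.trans hz.1.le, hz.2⟩
          exact (h1.mono_left h2).eventually_lt_const hlt
        have hev2 : ∀ᶠ z in 𝓝[>] x, z ∈ Ioc x (min y t) :=
          Ioc_mem_nhdsGT (lt_min hy hxt)
        obtain ⟨z, hz, hxz, hzm⟩ := (hev.and hev2).exists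
        have hzy := hzm.trans (min_le_left _ _)
        have hzt := hzm.trans (min_le_right _ _)
        refine ⟨z, ?_, hxz, hzy⟩
        have hβ0 : 0 ≤ ∫ r in x..z, a r :=
          intervalIntegral.integral_nonneg hxz.le (fun r _ => ha0 r)
        have hint : ∫ r in x..z, a r * u r ≤ (∫ r in x..z, a r) * φ z := by
          rw [← intervalIntegral.integral_mul_const]
          refine intervalIntegral.integral_mono_on hxz.le (hsub hau hxs hxz.le hzt)
            ((hsub ha hxs hxz.le hzt).mul_const _) fun r hr => ?_
          exact mul_le_mul_of_nonneg_left ((huφ r ⟨hxs.trans hr.1, hr.2.trans hzt⟩).trans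
            (hφmono r z (hxs.trans hr.1) hr.2 hzt)) (ha0 r)
        have hx0 := hφpos x ⟨hxs, hxt.le⟩
        change φ z ≤ (c + ε) * Real.exp ((1 + ε) * α z)
        change φ x ≤ (c + ε) * Real.exp ((1 + ε) * α x) at hxS
        calc φ z = φ x + ∫ r in x..z, a r * u r := hφadd x z hxs hxz.le hzt
          _ ≤ φ x + (∫ r in x..z, a r) * ((1 + ε) * φ x) := by
              gcongr; exact hint.trans (by gcongr)
          _ = φ x * ((1 + ε) * (∫ r in x..z, a r) + 1) := by ring
          _ ≤ φ x * Real.exp ((1 + ε) * (∫ r in x..z, a r)) := by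
              gcongr; exact Real.add_one_le_exp _
          _ ≤ (c + ε) * Real.exp ((1 + ε) * α x) * Real.exp ((1 + ε) * (∫ r in x..z, a r)) := by
              gcongr
          _ = (c + ε) * Real.exp ((1 + ε) * α z) := by
              rw [hαadd x z hxs hxz.le hzt, mul_assoc, ← Real.exp_add, mul_add]
    exact (huφ t ⟨hst, le_rfl⟩).trans (hall ⟨hst, le_rfl⟩)
  have hlim : Tendsto (fun ε : ℝ => (c + ε) * Real.exp ((1 + ε) * ∫ r in s..t, a r)) (𝓝[>] 0)
      (𝓝 (c * Real.exp (∫ r in s..t, a r))) := by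
    have : Continuous (fun ε : ℝ => (c + ε) * Real.exp ((1 + ε) * ∫ r in s..t, a r)) := by
      fun_prop
    simpa using (this.tendsto 0).mono_left nhdsWithin_le_nhds
  exact ge_of_tendsto hlim (eventually_mem_nhdsWithin.mono fun ε hε => key ε hε)

/-- Two-sided form of `gronwall_aux`: `t` may lie on either side of `s`. -/
theorem gronwall_uIoc {s t c : ℝ} {a u : ℝ → ℝ} (ha : IntervalIntegrable a volume s t)
    (ha0 : ∀ r, 0 ≤ a r) (hu : ContinuousOn u (uIcc s t)) (hu0 : ∀ r, 0 ≤ u r) (hc : 0 ≤ c)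
    (h : ∀ τ ∈ uIcc s t, u τ ≤ c + ∫ r in uIoc s τ, a r * u r) :
    u t ≤ c * Real.exp (∫ r in uIoc s t, a r) := by
  rcases le_total s t with hst | hst
  · rw [uIoc_of_le hst, ← intervalIntegral.integral_of_le hst]
    rw [uIcc_of_le hst] at hu h
    refine gronwall_aux hst ha ha0 hu hu0 hc fun τ hτ => ?_
    rw [intervalIntegral.integral_of_le hτ.1, ← uIoc_of_le hτ.1]
    exact h τ hτ
  · rw [uIcc_of_ge hst] at hu h
    have key := gronwall_aux (s := -s) (t := -t) (a := fun r => a (-r)) (u := fun r => u (-r))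
      (neg_le_neg hst) ((IntervalIntegrable.iff_comp_neg (by simp)).1 ha)
      (fun r => ha0 _) (hu.comp continuousOn_neg fun r hr => ⟨by linarith [hr.2], by linarith [hr.1]⟩)
      (fun r => hu0 _) hc (fun τ hτ => by
        have hτ' : -τ ≤ s := by linarith [hτ.1]
        have := h (-τ) ⟨by linarith [hτ.2], hτ'⟩
        rw [uIoc_of_ge hτ', ← intervalIntegral.integral_of_le hτ'] at this
        rw [intervalIntegral.integral_comp_neg (fun r => a r * u r)]
        simpa using this)
    rw [intervalIntegral.integral_comp_neg a] at key
    rw [uIoc_of_ge hst, ← intervalIntegral.integral_of_le hst]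
    simpa using key

section Cauchy

variable {R : Type*} [NormedRing R] [NormedAlgebra ℝ R]

/-- With `s` fixed, `τ ↦ Y τ * (Y s)⁻¹` solves the integral equation normed at `s`. -/
theorem cauchy_integral_eq [CompleteSpace R] {I : Set ℝ} {t0 : ℝ} {B Y : ℝ → R}
    (hBY : ∀ t ∈ I, IntervalIntegrable (fun r => B r * Y r) volume t0 t)
    (hY : ∀ t ∈ I, Y t = 1 + ∫ r in t0..t, B r * Y r) {s t : ℝ} (hs : s ∈ I) (ht : t ∈ I)
    (hinv : IsUnit (Y s)) :
    IntervalIntegrable (fun r => B r * (Y r * Ring.inverse (Y s))) volume s t ∧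
    Y t * Ring.inverse (Y s) = 1 + ∫ r in s..t, B r * (Y r * Ring.inverse (Y s)) := by
  have hst : IntervalIntegrable (fun r => B r * Y r) volume s t := (hBY s hs).symm.trans (hBY t ht)
  simp only [← mul_assoc]
  refine ⟨hst.mul_const _, ?_⟩
  have h1 : ∫ r in s..t, B r * Y r * Ring.inverse (Y s) =
      (∫ r in s..t, B r * Y r) * Ring.inverse (Y s) :=
    ((ContinuousLinearMap.mul ℝ R).flip (Ring.inverse (Y s))).intervalIntegral_comp_comm hst
  have h2 : Y t - Y s = ∫ r in s..t, B r * Y r := by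
    rw [hY t ht, hY s hs, add_sub_add_left_eq_sub,
      intervalIntegral.integral_interval_sub_left (hBY t ht) (hBY s hs)]
  rw [h1, ← h2, sub_mul, Ring.mul_inverse_cancel _ hinv]
  abel

theorem continuousOn_of_integral_eq_s13 {s t : ℝ} {B C : ℝ → R} {c : R}
    (hBC : IntervalIntegrable (fun r => B r * C r) volume s t)
    (hC : ∀ τ ∈ uIcc s t, C τ = c + ∫ r in s..τ, B r * C r) : ContinuousOn C (uIcc s t) :=
  (continuousOn_const.add
    (intervalIntegral.continuousOn_primitive_interval' hBC left_mem_uIcc)).congr hC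

/-- A solution normed at `s` is bounded by the exponential of `∫ ‖B‖`. Only `‖1‖ ≤ 1` is assumed, so
that the zero ring is allowed. -/
theorem norm_cauchy_le (h1 : ‖(1 : R)‖ ≤ 1) {s t : ℝ} {B C : ℝ → R}
    (hB : IntervalIntegrable B volume s t)
    (hBC : IntervalIntegrable (fun r => B r * C r) volume s t)
    (hC : ∀ τ ∈ uIcc s t, C τ = 1 + ∫ r in s..τ, B r * C r) :
    ‖C t‖ ≤ Real.exp (∫ r in uIoc s t, ‖B r‖) := by
  have hcont := continuousOn_of_integral_eq_s13 hBC hC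
  rw [← one_mul (Real.exp _)]
  refine gronwall_uIoc (u := fun r => ‖C r‖) hB.norm (fun _ => norm_nonneg _) hcont.norm
    (fun _ => norm_nonneg _) zero_le_one fun τ hτ => ?_
  have hsub : uIcc s τ ⊆ uIcc s t := uIcc_subset_uIcc_left hτ
  rw [hC τ hτ]
  refine (norm_add_le _ _).trans (add_le_add h1 ?_)
  refine intervalIntegral.norm_integral_le_integral_norm_uIoc.trans ?_
  refine setIntegral_mono_on (intervalIntegrable_iff.1 (hBC.mono_set hsub).norm)
    (intervalIntegrable_iff.1 ((hB.norm.mul_continuousOn hcont.norm).mono_set hsub))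
    measurableSet_uIoc fun r _ => norm_mul_le _ _

/-- The difference `D = C₁ - C₂` solves `D τ = ∫ r in s..τ, (B₁ D + (B₁ - B₂) C₂)`, to which
Grönwall's inequality applies with kernel `‖B₁‖`. -/
theorem norm_cauchy_sub_le (h1 : ‖(1 : R)‖ ≤ 1) {s t : ℝ} {B₁ B₂ C₁ C₂ : ℝ → R}
    (hB₁ : IntervalIntegrable B₁ volume s t) (hB₂ : IntervalIntegrable B₂ volume s t)
    (hBC₁ : IntervalIntegrable (fun r => B₁ r * C₁ r) volume s t)
    (hBC₂ : IntervalIntegrable (fun r => B₂ r * C₂ r) volume s t)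
    (hC₁ : ∀ τ ∈ uIcc s t, C₁ τ = 1 + ∫ r in s..τ, B₁ r * C₁ r)
    (hC₂ : ∀ τ ∈ uIcc s t, C₂ τ = 1 + ∫ r in s..τ, B₂ r * C₂ r) :
    ‖C₁ t - C₂ t‖ ≤ (∫ r in uIoc s t, ‖B₁ r - B₂ r‖) * Real.exp (∫ r in uIoc s t, ‖B₂ r‖) *
      Real.exp (∫ r in uIoc s t, ‖B₁ r‖) := by
  have hc₁ := continuousOn_of_integral_eq_s13 hBC₁ hC₁
  have hc₂ := continuousOn_of_integral_eq_s13 hBC₂ hC₂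
  have hC₂le : ∀ τ ∈ uIcc s t, ‖C₂ τ‖ ≤ Real.exp (∫ r in uIoc s t, ‖B₂ r‖) := by
    intro τ hτ
    have hsub : uIcc s τ ⊆ uIcc s t := uIcc_subset_uIcc_left hτ
    refine (norm_cauchy_le h1 (hB₂.mono_set hsub) (hBC₂.mono_set hsub)
      fun x hx => hC₂ x (hsub hx)).trans (Real.exp_le_exp.2 ?_)
    exact setIntegral_mono_set (intervalIntegrable_iff.1 hB₂.norm)
      (Eventually.of_forall fun _ => norm_nonneg _)
      (uIoc_subset_uIoc_of_uIcc_subset_uIcc hsub).eventuallyLE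
  set N := Real.exp (∫ r in uIoc s t, ‖B₂ r‖) with hN
  refine gronwall_uIoc (u := fun r => ‖C₁ r - C₂ r‖) hB₁.norm (fun _ => norm_nonneg _)
    (hc₁.sub hc₂).norm (fun _ => norm_nonneg _)
    (mul_nonneg (integral_nonneg fun _ => norm_nonneg _) (Real.exp_nonneg _)) fun τ hτ => ?_
  have hsub : uIcc s τ ⊆ uIcc s t := uIcc_subset_uIcc_left hτ
  have hi1 : IntegrableOn (fun r => ‖B₁ r - B₂ r‖ * N) (uIoc s τ) :=
    intervalIntegrable_iff.1 (((hB₁.sub hB₂).norm.mul_const N).mono_set hsub)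
  have hi2 : IntegrableOn (fun r => ‖B₁ r‖ * ‖C₁ r - C₂ r‖) (uIoc s τ) :=
    intervalIntegrable_iff.1 ((hB₁.norm.mul_continuousOn (hc₁.sub hc₂).norm).mono_set hsub)
  calc ‖C₁ τ - C₂ τ‖ = ‖∫ r in s..τ, (B₁ r * C₁ r - B₂ r * C₂ r)‖ := by
        rw [hC₁ τ hτ, hC₂ τ hτ, add_sub_add_left_eq_sub,
          intervalIntegral.integral_sub (hBC₁.mono_set hsub) (hBC₂.mono_set hsub)]
    _ ≤ ∫ r in uIoc s τ, ‖B₁ r * C₁ r - B₂ r * C₂ r‖ :=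
        intervalIntegral.norm_integral_le_integral_norm_uIoc
    _ ≤ ∫ r in uIoc s τ, (‖B₁ r - B₂ r‖ * N + ‖B₁ r‖ * ‖C₁ r - C₂ r‖) := by
        refine setIntegral_mono_on
          (intervalIntegrable_iff.1 ((hBC₁.sub hBC₂).norm.mono_set hsub)) (hi1.add hi2)
          measurableSet_uIoc fun r hr => ?_
        have hr' : r ∈ uIcc s t := hsub (uIoc_subset_uIcc hr)
        have e : B₁ r * C₁ r - B₂ r * C₂ r =
            (B₁ r - B₂ r) * C₂ r + B₁ r * (C₁ r - C₂ r) := by noncomm_ring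
        rw [e]
        refine (norm_add_le _ _).trans (add_le_add ((norm_mul_le _ _).trans ?_) (norm_mul_le _ _))
        exact mul_le_mul_of_nonneg_left (hC₂le r hr') (norm_nonneg _)
    _ = (∫ r in uIoc s τ, ‖B₁ r - B₂ r‖) * N + ∫ r in uIoc s τ, ‖B₁ r‖ * ‖C₁ r - C₂ r‖ := by
        rw [integral_add hi1 hi2, integral_mul_const]
    _ ≤ _ := by
        refine add_le_add (mul_le_mul_of_nonneg_right ?_ (Real.exp_nonneg _)) le_rfl
        exact setIntegral_mono_set (intervalIntegrable_iff.1 (hB₁.sub hB₂).norm)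
          (Eventually.of_forall fun _ => norm_nonneg _)
          (uIoc_subset_uIoc_of_uIcc_subset_uIcc hsub).eventuallyLE

end Cauchy

/-- For the Cauchy matrix `C(t,s,μ) = X(t,μ) X(s,μ)⁻¹`:
`‖C(t,s,μ₁) − C(t,s,μ₂)‖ ≤ e^{2n̂(μ₁)+n̂(μ₂)} (e^{n̂(μ₁)} + e^{n̂(μ₂)}) ∫_I ‖A(r,μ₁) − A(r,μ₂)‖ dr`,
and in particular, if `n̂(μ) ≤ K` for all `μ`, the bound `2 e^{4K} ∫_I ‖A(r,μ₁) − A(r,μ₂)‖ dr`. -/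
theorem cauchy_matrix_difference_norm_le (n m : ℕ)
    (I : Set ℝ) (hIopen : IsOpen I) (hIord : I.OrdConnected)
    (t0 : ℝ) (ht0 : t0 ∈ I)
    (M : Set (EuclideanSpace ℝ (Fin m))) (hMopen : IsOpen M) (hMconn : IsConnected M)
    (A X : ℝ → EuclideanSpace ℝ (Fin m) →
      (EuclideanSpace ℝ (Fin n) →L[ℝ] EuclideanSpace ℝ (Fin n)))
    (hA : ∀ μ ∈ M, IntegrableOn (fun t => A t μ) I volume)
    (hAX : ∀ μ ∈ M, ∀ t ∈ I, IntervalIntegrable (fun r => A r μ * X r μ) volume t0 t)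
    (hX : ∀ μ ∈ M, ∀ t ∈ I, X t μ = 1 + ∫ r in t0..t, A r μ * X r μ)
    (hinv : ∀ t ∈ I, ∀ μ ∈ M, IsUnit (X t μ)) :
    (∀ t ∈ I, ∀ s ∈ I, ∀ μ1 ∈ M, ∀ μ2 ∈ M,
      ‖X t μ1 * Ring.inverse (X s μ1) - X t μ2 * Ring.inverse (X s μ2)‖ ≤
        Real.exp (2 * (∫ r in I, ‖A r μ1‖) + (∫ r in I, ‖A r μ2‖)) *
          (Real.exp (∫ r in I, ‖A r μ1‖) + Real.exp (∫ r in I, ‖A r μ2‖)) *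
          ∫ r in I, ‖A r μ1 - A r μ2‖) ∧
    (∀ K : ℝ, (∀ μ ∈ M, (∫ r in I, ‖A r μ‖) ≤ K) →
      ∀ t ∈ I, ∀ s ∈ I, ∀ μ1 ∈ M, ∀ μ2 ∈ M,
        ‖X t μ1 * Ring.inverse (X s μ1) - X t μ2 * Ring.inverse (X s μ2)‖ ≤
          2 * Real.exp (4 * K) * ∫ r in I, ‖A r μ1 - A r μ2‖) := by
  have main : ∀ t ∈ I, ∀ s ∈ I, ∀ μ1 ∈ M, ∀ μ2 ∈ M,
      ‖X t μ1 * Ring.inverse (X s μ1) - X t μ2 * Ring.inverse (X s μ2)‖ ≤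
        Real.exp ((∫ r in I, ‖A r μ1‖) + ∫ r in I, ‖A r μ2‖) * ∫ r in I, ‖A r μ1 - A r μ2‖ := by
    intro t ht s hs μ1 hμ1 μ2 hμ2
    have hstI : uIcc s t ⊆ I := hIord.uIcc_subset hs ht
    have hIocI : uIoc s t ⊆ I := uIoc_subset_uIcc.trans hstI
    have hint : ∀ μ ∈ M, IntervalIntegrable (fun r => A r μ) volume s t := fun μ hμ =>
      intervalIntegrable_iff.2 ((hA μ hμ).mono_set hIocI)
    have hC : ∀ μ ∈ M, ∀ τ ∈ I, _ := fun μ hμ τ hτ =>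
      cauchy_integral_eq (hAX μ hμ) (hX μ hμ) hs hτ (hinv s hs μ hμ)
    have hmono : ∀ {f : ℝ → EuclideanSpace ℝ (Fin n) →L[ℝ] EuclideanSpace ℝ (Fin n)},
        IntegrableOn f I volume → ∫ r in uIoc s t, ‖f r‖ ≤ ∫ r in I, ‖f r‖ := fun hf =>
      setIntegral_mono_set hf.norm (Eventually.of_forall fun _ => norm_nonneg _)
        hIocI.eventuallyLE
    -- `‖1‖ ≤ 1` rather than `‖1‖ = 1`, since for `n = 0` the space is trivial.
    have key := norm_cauchy_sub_le ContinuousLinearMap.norm_id_le (hint μ1 hμ1) (hint μ2 hμ2)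
      (hC μ1 hμ1 t ht).1 (hC μ2 hμ2 t ht).1
      (fun τ hτ => (hC μ1 hμ1 τ (hstI hτ)).2) (fun τ hτ => (hC μ2 hμ2 τ (hstI hτ)).2)
    refine key.trans ?_
    calc _ ≤ (∫ r in I, ‖A r μ1 - A r μ2‖) * Real.exp (∫ r in I, ‖A r μ2‖) *
          Real.exp (∫ r in I, ‖A r μ1‖) := by
          have d := hmono ((hA μ1 hμ1).sub (hA μ2 hμ2))
          have e1 := Real.exp_le_exp.2 (hmono (hA μ1 hμ1))
          have e2 := Real.exp_le_exp.2 (hmono (hA μ2 hμ2))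
          have d0 : 0 ≤ ∫ r in I, ‖A r μ1 - A r μ2‖ := integral_nonneg fun _ => norm_nonneg _
          exact mul_le_mul (mul_le_mul d e2 (Real.exp_nonneg _) d0) e1 (Real.exp_nonneg _)
            (mul_nonneg d0 (Real.exp_nonneg _))
      _ = _ := by rw [Real.exp_add]; ring
  have hn : ∀ μ, 0 ≤ ∫ r in I, ‖A r μ‖ := fun μ => integral_nonneg fun _ => norm_nonneg _
  have hδ : ∀ μ1 μ2, 0 ≤ ∫ r in I, ‖A r μ1 - A r μ2‖ := fun _ _ =>
    integral_nonneg fun _ => norm_nonneg _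
  refine ⟨fun t ht s hs μ1 hμ1 μ2 hμ2 => ?_, fun K hK t ht s hs μ1 hμ1 μ2 hμ2 => ?_⟩
  · refine (main t ht s hs μ1 hμ1 μ2 hμ2).trans (mul_le_mul_of_nonneg_right ?_ (hδ μ1 μ2))
    refine (Real.exp_le_exp.2 (by linarith [hn μ1] :
      _ ≤ 2 * (∫ r in I, ‖A r μ1‖) + ∫ r in I, ‖A r μ2‖)).trans ?_
    refine le_mul_of_one_le_right (Real.exp_nonneg _) ?_
    linarith [Real.one_le_exp (hn μ1), Real.exp_pos (∫ r in I, ‖A r μ2‖)]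
  · refine (main t ht s hs μ1 hμ1 μ2 hμ2).trans (mul_le_mul_of_nonneg_right ?_ (hδ μ1 μ2))
    have h1 := hK μ1 hμ1
    have h2 := hK μ2 hμ2
    have h3 : Real.exp ((∫ r in I, ‖A r μ1‖) + ∫ r in I, ‖A r μ2‖) ≤ Real.exp (4 * K) :=
      Real.exp_le_exp.2 (by linarith [hn μ1])
    linarith [Real.exp_pos (4 * K)]
end

section
/- Assume X(t,μ) is invertible for every t ∈ I and μ ∈ M, and let Y(·,μ) be the solution of dY/dt = A(t,μ)Y + Φ(t,μ), Y(t0,μ) = X0(μ). Then for all t ∈ I and all μ1, μ2 ∈ M: ‖Y(t,μ1) − Y(t,μ2)‖ ≤ e^{n̂(μ2)} ‖X0(μ1) − X0(μ2)‖ + e^{2n̂(μ1) + n̂(μ2)} ( ‖X0(μ1)‖ + (e^{n̂(μ1)} + e^{n̂(μ2)}) ∫_I ‖Φ(s,μ1)‖ ds ) ∫_I ‖A(s,μ1) − A(s,μ2)‖ ds + e^{2n̂(μ2)} ∫_I ‖Φ(s,μ1) − Φ(s,μ2)‖ ds, where n̂(μ) = ∫_I ‖A(s,μ)‖ ds. 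-/
/-!
The difference `D = Y(·,μ₁) − Y(·,μ₂)` solves the linear equation
`D' = A(·,μ₂) D + g` with `g = (A(·,μ₁) − A(·,μ₂)) Y(·,μ₁) + (Φ(·,μ₁) − Φ(·,μ₂))`.
Grönwall's inequality with an integrable kernel gives, for any solution of `Z' = B Z + f`, the
a priori bound `‖Z(t)‖ ≤ e^{∫‖B‖} (‖Z(t₀)‖ + ∫‖f‖)` (`norm_le_exp_mul_of_linear_ode`). Applied to
`Y(·,μ₁)` it bounds `g`; applied to `D` it then yields an estimate in which the coefficient of
`∫‖A(·,μ₁) − A(·,μ₂)‖` is `e^{n̂(μ₁)+n̂(μ₂)} (‖X0(μ₁)‖ + ∫‖Φ(·,μ₁)‖)`, which is at most the claimed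
one because `n̂ ≥ 0`.

As the coefficients are merely integrable, Grönwall's inequality is proved through the fundamental
theorem of calculus for absolutely continuous functions.
-/

open MeasureTheory Set

/-- The exponential of a nonpositive absolutely continuous function is absolutely continuous,
since `exp` is `1`-Lipschitz on `(-∞, 0]`. -/
lemma absolutelyContinuousOnInterval_exp_neg_s16 {g : ℝ → ℝ} {a b : ℝ}
    (hg : AbsolutelyContinuousOnInterval g a b) (h0 : ∀ x ∈ uIcc a b, 0 ≤ g x) :
    AbsolutelyContinuousOnInterval (fun x => Real.exp (-g x)) a b := by
  have key : ∀ x y : ℝ, 0 ≤ x → 0 ≤ y →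
      dist (Real.exp (-x)) (Real.exp (-y)) ≤ dist x y := by
    have aux : ∀ x y : ℝ, 0 ≤ x → x ≤ y → Real.exp (-x) - Real.exp (-y) ≤ y - x := by
      intro x y hx hxy
      have h1 : Real.exp (-x) ≤ 1 := Real.exp_le_one_iff.2 (by linarith)
      have h2 : Real.exp (-y) = Real.exp (-x) * Real.exp (-(y - x)) := by
        rw [← Real.exp_add]; ring_nf
      have h3 := Real.add_one_le_exp (-(y - x))
      have h4 := Real.exp_pos (-x)
      nlinarith
    intro x y hx hy
    rw [Real.dist_eq, Real.dist_eq]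
    rcases le_total x y with h | h
    · rw [abs_of_nonneg (sub_nonneg.2 (Real.exp_le_exp.2 (by linarith))),
        abs_of_nonpos (by linarith)]
      linarith [aux x y hx h]
    · rw [abs_of_nonpos (sub_nonpos.2 (Real.exp_le_exp.2 (by linarith))),
        abs_of_nonneg (by linarith)]
      linarith [aux y x hy h]
  rw [absolutelyContinuousOnInterval_iff] at hg ⊢
  intro ε hε
  obtain ⟨δ, hδ, H⟩ := hg ε hε
  refine ⟨δ, hδ, fun E hE hlt => lt_of_le_of_lt (Finset.sum_le_sum fun i hi => ?_) (H E hE hlt)⟩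
  have := hE.1 i hi
  exact key _ _ (h0 _ this.1) (h0 _ this.2)

/-- Grönwall's inequality in integral form, with a nonnegative integrable kernel `k`: writing
`F` for the right-hand side of `hle`, the function `e^{-∫k} F` is absolutely continuous with
nonpositive derivative almost everywhere. -/
lemma gronwall_integrable_kernel {k u : ℝ → ℝ} {a b c : ℝ} (hab : a ≤ b)
    (hk : IntervalIntegrable k volume a b) (hk0 : ∀ x, 0 ≤ k x)
    (hu : ContinuousOn u (uIcc a b))
    (hle : ∀ s ∈ Icc a b, u s ≤ c + ∫ x in a..s, k x * u x) :
    u b ≤ Real.exp (∫ x in a..b, k x) * c := by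
  have hku : IntervalIntegrable (fun x => k x * u x) volume a b := hk.mul_continuousOn hu
  set α : ℝ → ℝ := fun x => ∫ s in a..x, k s with hα
  set P : ℝ → ℝ := fun x => ∫ s in a..x, k s * u s with hP
  have hα0 : ∀ x ∈ uIcc a b, 0 ≤ α x := by
    intro x hx
    rw [uIcc_of_le hab] at hx
    exact intervalIntegral.integral_nonneg hx.1 fun s _ => hk0 s
  have acα : AbsolutelyContinuousOnInterval α a b :=
    hk.absolutelyContinuousOnInterval_intervalIntegral left_mem_uIcc
  have acP : AbsolutelyContinuousOnInterval P a b :=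
    hku.absolutelyContinuousOnInterval_intervalIntegral left_mem_uIcc
  have acE := absolutelyContinuousOnInterval_exp_neg_s16 acα hα0
  have acG : AbsolutelyContinuousOnInterval
      (fun x => c * Real.exp (-α x) + Real.exp (-α x) * P x) a b :=
    (acE.const_mul c).fun_add (acE.fun_mul acP)
  have hFTC := acG.integral_deriv_eq_sub
  have hderiv : ∀ᵐ x, x ∈ Ioc a b →
      deriv (fun x => c * Real.exp (-α x) + Real.exp (-α x) * P x) x ≤ 0 := by
    filter_upwards [hk.ae_hasDerivAt_integral, hku.ae_hasDerivAt_integral] with x h1 h2 hx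
    have hx' : x ∈ uIcc a b := by rw [uIcc_of_le hab]; exact Ioc_subset_Icc_self hx
    have d1 : HasDerivAt α (k x) x := h1 hx' a left_mem_uIcc
    have d2 : HasDerivAt P (k x * u x) x := h2 hx' a left_mem_uIcc
    have dE := d1.neg.exp
    have dG := (dE.const_mul c).add (dE.mul d2)
    have hval : deriv (fun x => c * Real.exp (-α x) + Real.exp (-α x) * P x) x = _ := dG.deriv
    rw [hval]
    have h3 := hle x (Ioc_subset_Icc_self hx)
    have h4 : 0 ≤ Real.exp (-α x) * k x * (c + P x - u x) :=
      mul_nonneg (mul_nonneg (Real.exp_pos _).le (hk0 x)) (by simp only [hP]; linarith)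
    simp only [Pi.neg_apply]
    nlinarith [h4]
  have hnonpos : ∫ x in a..b,
      deriv (fun x => c * Real.exp (-α x) + Real.exp (-α x) * P x) x ≤ 0 := by
    rw [intervalIntegral.integral_of_le hab]
    exact integral_nonpos_of_ae ((ae_restrict_iff' measurableSet_Ioc).2 hderiv)
  have hαa : α a = 0 := by simp [hα]
  have hPa : P a = 0 := by simp [hP]
  rw [hFTC, hαa, hPa] at hnonpos
  have h5 : Real.exp (-α b) * (c + P b) ≤ c := by
    simp only [neg_zero, Real.exp_zero] at hnonpos
    linarith
  have h6 : Real.exp (α b) * Real.exp (-α b) = 1 := by rw [← Real.exp_add]; simp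
  have h7 := mul_le_mul_of_nonneg_left h5 (Real.exp_pos (α b)).le
  rw [← mul_assoc, h6, one_mul] at h7
  exact (hle b (right_mem_Icc.2 hab)).trans h7

section LinearEquation

variable {R : Type*} [NormedRing R] [NormedAlgebra ℝ R]

/-- The forcing term is absorbed into the constant of Grönwall's inequality by bounding its integral
over `[a, s]` by the one over `[a, b]`. -/
lemma norm_le_exp_mul_of_linear_ode_forward {B f Z : ℝ → R} {z0 : R} {a b : ℝ} (hab : a ≤ b)
    (hB : IntervalIntegrable B volume a b) (hf : IntervalIntegrable f volume a b)
    (hZc : ContinuousOn Z (uIcc a b))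
    (hZ : ∀ s ∈ uIcc a b, Z s = z0 + ∫ x in a..s, (B x * Z x + f x)) :
    ‖Z b‖ ≤ Real.exp (∫ x in a..b, ‖B x‖) * (‖z0‖ + ∫ x in a..b, ‖f x‖) := by
  refine gronwall_integrable_kernel (u := fun x => ‖Z x‖) hab hB.norm
    (fun _ => norm_nonneg _) hZc.norm fun s hs => ?_
  have hs' : s ∈ uIcc a b := by rwa [uIcc_of_le hab]
  have hsub : uIcc a s ⊆ uIcc a b := uIcc_subset_uIcc_left hs'
  have hBZ : IntervalIntegrable (fun x => ‖B x‖ * ‖Z x‖) volume a s :=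
    (hB.norm.mul_continuousOn hZc.norm).mono_set hsub
  have hfs : IntervalIntegrable (fun x => ‖f x‖) volume a s := hf.norm.mono_set hsub
  have h1 : ‖∫ x in a..s, (B x * Z x + f x)‖ ≤ ∫ x in a..s, (‖B x‖ * ‖Z x‖ + ‖f x‖) :=
    intervalIntegral.norm_integral_le_of_norm_le hs.1
      (Filter.Eventually.of_forall fun x _ =>
        (norm_add_le _ _).trans (by gcongr; exact norm_mul_le _ _)) (hBZ.add hfs)
  rw [intervalIntegral.integral_add hBZ hfs] at h1
  have h2 : ∫ x in a..s, ‖f x‖ ≤ ∫ x in a..b, ‖f x‖ :=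
    intervalIntegral.integral_mono_interval le_rfl hs.1 hs.2
      (Filter.Eventually.of_forall fun x => norm_nonneg _) hf.norm
  change ‖Z s‖ ≤ _
  rw [hZ s hs']
  linarith [norm_add_le z0 (∫ x in a..s, (B x * Z x + f x))]

/-- A priori bound for `Z' = B Z + f`, `Z(a) = z0`, in either time direction; for `b < a` it is
the forward bound for the reflected function `s ↦ Z(-s)`. -/
lemma norm_le_exp_mul_of_linear_ode {B f Z : ℝ → R} {z0 : R} {a b : ℝ}
    (hB : IntervalIntegrable B volume a b) (hf : IntervalIntegrable f volume a b)
    (hZc : ContinuousOn Z (uIcc a b))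
    (hZ : ∀ s ∈ uIcc a b, Z s = z0 + ∫ x in a..s, (B x * Z x + f x)) :
    ‖Z b‖ ≤ Real.exp (∫ x in uIoc a b, ‖B x‖) * (‖z0‖ + ∫ x in uIoc a b, ‖f x‖) := by
  rcases le_total a b with hab | hab
  · rw [uIoc_of_le hab, ← intervalIntegral.integral_of_le hab,
      ← intervalIntegral.integral_of_le hab]
    exact norm_le_exp_mul_of_linear_ode_forward hab hB hf hZc hZ
  · have hmem : ∀ s ∈ uIcc (-a) (-b), -s ∈ uIcc a b := by
      intro s hs
      rw [uIcc_of_le (by linarith)] at hs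
      rw [uIcc_of_ge hab]
      exact ⟨by linarith [hs.2], by linarith [hs.1]⟩
    have hneg : ∀ {g : ℝ → R}, IntervalIntegrable g volume a b →
        IntervalIntegrable (fun x => -g (-x)) volume (-a) (-b) := fun {g} hg =>
      ((IntervalIntegrable.iff_comp_neg (f := g)).1 hg).neg
    have key := norm_le_exp_mul_of_linear_ode_forward
      (B := fun x => -B (-x)) (f := fun x => -f (-x)) (Z := fun x => Z (-x)) (z0 := z0)
      (a := -a) (b := -b) (by linarith) (hneg hB) (hneg hf)
      (hZc.comp continuous_neg.continuousOn hmem) (by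
        intro s hs
        rw [hZ _ (hmem s hs)]
        congr 1
        have h1 := intervalIntegral.integral_comp_neg (a := -a) (b := s)
          (fun x => B x * Z x + f x)
        rw [neg_neg] at h1
        rw [intervalIntegral.integral_symm, ← h1, ← intervalIntegral.integral_neg]
        congr 1
        ext x
        rw [neg_add, neg_mul])
    simp only [norm_neg, neg_neg] at key
    have h2 := intervalIntegral.integral_comp_neg (a := -a) (b := -b) (fun x => ‖B x‖)
    have h3 := intervalIntegral.integral_comp_neg (a := -a) (b := -b) (fun x => ‖f x‖)
    simp only [neg_neg] at h2 h3
    rw [h2, h3] at key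
    rwa [uIoc_of_ge hab, ← intervalIntegral.integral_of_le hab,
      ← intervalIntegral.integral_of_le hab]

end LinearEquation

/-- For the solution `Y(·,μ)` of `dY/dt = A(t,μ)Y + Φ(t,μ)`,
`Y(t0,μ) = X0(μ)`:
`‖Y(t,μ₁) − Y(t,μ₂)‖ ≤ e^{n̂(μ₂)} ‖X0(μ₁) − X0(μ₂)‖
  + e^{2n̂(μ₁)+n̂(μ₂)} (‖X0(μ₁)‖ + (e^{n̂(μ₁)} + e^{n̂(μ₂)}) ∫_I ‖Φ(s,μ₁)‖ ds) ∫_I ‖A(s,μ₁) − A(s,μ₂)‖ ds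
  + e^{2n̂(μ₂)} ∫_I ‖Φ(s,μ₁) − Φ(s,μ₂)‖ ds`. -/
theorem inhomogeneous_solution_difference_bound (n m : ℕ)
    (I : Set ℝ) (hIopen : IsOpen I) (hIord : I.OrdConnected)
    (t0 : ℝ) (ht0 : t0 ∈ I)
    (M : Set (EuclideanSpace ℝ (Fin m))) (hMopen : IsOpen M) (hMconn : IsConnected M)
    (A Φ X Y : ℝ → EuclideanSpace ℝ (Fin m) →
      (EuclideanSpace ℝ (Fin n) →L[ℝ] EuclideanSpace ℝ (Fin n)))
    (X0 : EuclideanSpace ℝ (Fin m) →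
      (EuclideanSpace ℝ (Fin n) →L[ℝ] EuclideanSpace ℝ (Fin n)))
    (hA : ∀ μ ∈ M, IntegrableOn (fun t => A t μ) I volume)
    (hΦ : ∀ μ ∈ M, IntegrableOn (fun t => Φ t μ) I volume)
    (hAX : ∀ μ ∈ M, ∀ t ∈ I, IntervalIntegrable (fun s => A s μ * X s μ) volume t0 t)
    (hX : ∀ μ ∈ M, ∀ t ∈ I, X t μ = 1 + ∫ s in t0..t, A s μ * X s μ)
    (hinv : ∀ t ∈ I, ∀ μ ∈ M, IsUnit (X t μ))
    (hAY : ∀ μ ∈ M, ∀ t ∈ I,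
      IntervalIntegrable (fun s => A s μ * Y s μ + Φ s μ) volume t0 t)
    (hY : ∀ μ ∈ M, ∀ t ∈ I,
      Y t μ = X0 μ + ∫ s in t0..t, (A s μ * Y s μ + Φ s μ)) :
    ∀ t ∈ I, ∀ μ1 ∈ M, ∀ μ2 ∈ M,
      ‖Y t μ1 - Y t μ2‖ ≤
        Real.exp (∫ s in I, ‖A s μ2‖) * ‖X0 μ1 - X0 μ2‖ +
        Real.exp (2 * (∫ s in I, ‖A s μ1‖) + (∫ s in I, ‖A s μ2‖)) *
          (‖X0 μ1‖ +
            (Real.exp (∫ s in I, ‖A s μ1‖) + Real.exp (∫ s in I, ‖A s μ2‖)) *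
              ∫ s in I, ‖Φ s μ1‖) *
          (∫ s in I, ‖A s μ1 - A s μ2‖) +
        Real.exp (2 * ∫ s in I, ‖A s μ2‖) * ∫ s in I, ‖Φ s μ1 - Φ s μ2‖ := by
  intro t ht μ1 h1 μ2 h2
  have hsub : ∀ s ∈ I, uIcc t0 s ⊆ I := fun s hs => hIord.uIcc_subset ht0 hs
  have hsub' : ∀ s ∈ I, uIoc t0 s ⊆ I := fun s hs => uIoc_subset_uIcc.trans (hsub s hs)
  have hii : ∀ {g : ℝ → (EuclideanSpace ℝ (Fin n) →L[ℝ] EuclideanSpace ℝ (Fin n))},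
      IntegrableOn g I volume → ∀ s ∈ I, IntervalIntegrable g volume t0 s :=
    fun hg s hs => intervalIntegrable_iff.2 (hg.mono_set (hsub' s hs))
  have hmono : ∀ {g : ℝ → (EuclideanSpace ℝ (Fin n) →L[ℝ] EuclideanSpace ℝ (Fin n))},
      IntegrableOn g I volume → ∀ s ∈ I, ∫ x in uIoc t0 s, ‖g x‖ ≤ ∫ x in I, ‖g x‖ :=
    fun hg s hs => setIntegral_mono_set hg.norm
      (Filter.Eventually.of_forall fun _ => norm_nonneg _)
      (Filter.Eventually.of_forall (hsub' s hs))
  have hYc : ∀ μ ∈ M, ∀ s ∈ I, ContinuousOn (fun x => Y x μ) (uIcc t0 s) := fun μ hμ s hs =>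
    (continuousOn_const.add (intervalIntegral.continuousOn_primitive_interval'
      (hAY μ hμ s hs) left_mem_uIcc)).congr fun x hx => hY μ hμ x (hsub s hs hx)
  have hdA : IntegrableOn (fun s => A s μ1 - A s μ2) I volume := (hA μ1 h1).sub (hA μ2 h2)
  have hdΦ : IntegrableOn (fun s => Φ s μ1 - Φ s μ2) I volume := (hΦ μ1 h1).sub (hΦ μ2 h2)
  set n1 := ∫ s in I, ‖A s μ1‖ with hn1
  set n2 := ∫ s in I, ‖A s μ2‖ with hn2
  set p := ∫ s in I, ‖Φ s μ1‖ with hp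
  set dA := ∫ s in I, ‖A s μ1 - A s μ2‖ with hdAdef
  set dΦ := ∫ s in I, ‖Φ s μ1 - Φ s μ2‖ with hdΦdef
  have hn1_0 : 0 ≤ n1 := integral_nonneg fun _ => norm_nonneg _
  have hn2_0 : 0 ≤ n2 := integral_nonneg fun _ => norm_nonneg _
  have hp_0 : 0 ≤ p := integral_nonneg fun _ => norm_nonneg _
  have hdA_0 : 0 ≤ dA := integral_nonneg fun _ => norm_nonneg _
  have hdΦ_0 : 0 ≤ dΦ := integral_nonneg fun _ => norm_nonneg _
  set C := Real.exp n1 * (‖X0 μ1‖ + p) with hC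
  have hY1 : ∀ s ∈ uIcc t0 t, ‖Y s μ1‖ ≤ C := by
    intro s hs
    have hsI := hsub t ht hs
    refine (norm_le_exp_mul_of_linear_ode (hii (hA μ1 h1) s hsI) (hii (hΦ μ1 h1) s hsI)
      (hYc μ1 h1 s hsI) fun x hx => hY μ1 h1 x (hsub s hsI hx)).trans ?_
    have := hmono (hA μ1 h1) s hsI
    have := hmono (hΦ μ1 h1) s hsI
    rw [hC]
    gcongr
  have hC0 : 0 ≤ C := (norm_nonneg _).trans (hY1 t0 left_mem_uIcc)
  have hg1 : IntervalIntegrable (fun s => (A s μ1 - A s μ2) * Y s μ1) volume t0 t :=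
    (hii hdA t ht).mul_continuousOn (hYc μ1 h1 t ht)
  -- the difference solves the `μ2`-equation with the forcing term `(A₁ - A₂) Y₁ + (Φ₁ - Φ₂)`
  have hD := norm_le_exp_mul_of_linear_ode (B := fun s => A s μ2)
    (f := fun s => (A s μ1 - A s μ2) * Y s μ1 + (Φ s μ1 - Φ s μ2))
    (Z := fun s => Y s μ1 - Y s μ2) (z0 := X0 μ1 - X0 μ2)
    (hii (hA μ2 h2) t ht) (hg1.add (hii hdΦ t ht))
    ((hYc μ1 h1 t ht).sub (hYc μ2 h2 t ht)) (by
      intro s hs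
      have hsI := hsub t ht hs
      change Y s μ1 - Y s μ2 = _
      rw [hY μ1 h1 s hsI, hY μ2 h2 s hsI, add_sub_add_comm,
        ← intervalIntegral.integral_sub (hAY μ1 h1 s hsI) (hAY μ2 h2 s hsI)]
      congr 2
      ext1 x
      simp only [mul_sub, sub_mul]
      abel)
  have hforce : ∫ x in uIoc t0 t, ‖(A x μ1 - A x μ2) * Y x μ1 + (Φ x μ1 - Φ x μ2)‖
      ≤ dA * C + dΦ := by
    have i1 : IntegrableOn (fun x => ‖A x μ1 - A x μ2‖ * C) (uIoc t0 t) volume :=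
      (hdA.mono_set (hsub' t ht)).norm.mul_const C
    have i2 : IntegrableOn (fun x => ‖Φ x μ1 - Φ x μ2‖) (uIoc t0 t) volume :=
      (hdΦ.mono_set (hsub' t ht)).norm
    calc ∫ x in uIoc t0 t, ‖(A x μ1 - A x μ2) * Y x μ1 + (Φ x μ1 - Φ x μ2)‖
        ≤ ∫ x in uIoc t0 t, (‖A x μ1 - A x μ2‖ * C + ‖Φ x μ1 - Φ x μ2‖) := by
          refine setIntegral_mono_on
            (intervalIntegrable_iff.1 (hg1.add (hii hdΦ t ht))).norm (i1.add i2)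
            measurableSet_uIoc fun x hx => (norm_add_le _ _).trans ?_
          gcongr
          refine (norm_mul_le _ _).trans ?_
          gcongr
          exact hY1 x (uIoc_subset_uIcc hx)
      _ = (∫ x in uIoc t0 t, ‖A x μ1 - A x μ2‖) * C + ∫ x in uIoc t0 t, ‖Φ x μ1 - Φ x μ2‖ := by
          rw [integral_add i1 i2, integral_mul_const]
      _ ≤ dA * C + dΦ := by
          have := hmono hdA t ht
          have := hmono hdΦ t ht
          gcongr
  have hmain : ‖Y t μ1 - Y t μ2‖ ≤ Real.exp n2 * (‖X0 μ1 - X0 μ2‖ + (dA * C + dΦ)) := by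
    refine hD.trans ?_
    have := hmono (hA μ2 h2) t ht
    gcongr
  refine hmain.trans ?_
  have e1 : Real.exp n2 * C ≤ Real.exp (2 * n1 + n2) *
      (‖X0 μ1‖ + (Real.exp n1 + Real.exp n2) * p) := by
    have h3 : Real.exp n2 * C = Real.exp (n1 + n2) * (‖X0 μ1‖ + 1 * p) := by
      rw [hC, Real.exp_add]; ring
    have h4 : 1 ≤ Real.exp n1 + Real.exp n2 := by
      linarith [Real.one_le_exp hn1_0, Real.exp_pos n2]
    rw [h3]
    gcongr
    linarith
  have e2 : Real.exp n2 ≤ Real.exp (2 * n2) := Real.exp_le_exp.2 (by linarith)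
  have e3 := mul_le_mul_of_nonneg_right e1 hdA_0
  have e4 := mul_le_mul_of_nonneg_right e2 hdΦ_0
  linarith
end

section
/- Assume X(t,μ) is invertible for every t ∈ I and μ ∈ M, let Y(·,μ) solve dY/dt = A(t,μ)Y + Φ(t,μ), Y(t0,μ) = X0(μ), and suppose: (1) the functions μ ↦ n̂(μ), μ ↦ ∫_I ‖Φ(t,μ)‖ dt and μ ↦ ‖X0(μ)‖ are bounded on M; (2) X0 is uniformly continuous on M, and A and Φ are integrally uniformly continuous on M. Then Y(t,μ) is uniformly continuous in μ uniformly with respect to t ∈ I: for every ε > 0 there is δ > 0 such that ‖μ1 − μ2‖ < δ implies both sup_{t ∈ I} ‖Y(t,μ1) − Y(t,μ2)‖ < ε and ‖X0(μ1) − X0(μ2)‖ + ∫_I ‖Ẏ(t,μ1) − Ẏ(t,μ2)‖ dt < ε. -/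
/-!
Two integral estimates carry the proof. The first is Grönwall's inequality with an integrable
coefficient, `gronwall_uIcc`: if `u ≤ c + |∫ α u|` with `α ≥ 0` integrable, then
`u ≤ c exp |∫ α|`. It holds because `(c + ∫ α u) exp (-∫ α)` is absolutely continuous with
almost everywhere nonpositive derivative. The second, `norm_le_of_eq_integral`, applies it to a
solution of `Z' = a Z + f` and gives `‖Z‖ ≤ (‖Z₀‖ + ∫_I ‖f‖) exp (∫_I ‖a‖)` on `I`.

With `f = Φ` this bounds all `Y(t, μ)` by one constant `C = 2 K exp K`. The difference
`D = Y(·, μ₁) - Y(·, μ₂)` solves `D' = A₁ D + f` with `f = (A₁ - A₂) Y₂ + (Φ₁ - Φ₂)`, and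
`∫_I ‖f‖ ≤ C ∫_I ‖A₁ - A₂‖ + ∫_I ‖Φ₁ - Φ₂‖`, so the same estimate makes `D` uniformly small on
`I`. Finally `∫_I ‖D'‖ ≤ K sup ‖D‖ + ∫_I ‖f‖`.
-/

open MeasureTheory Set

/-! ### Grönwall's inequality with an integrable coefficient -/

/-- A function whose increments are dominated by those of an absolutely continuous function is
absolutely continuous. -/
theorem AbsolutelyContinuousOnInterval.of_dist_le {f g : ℝ → ℝ} {a b : ℝ}
    (hf : AbsolutelyContinuousOnInterval f a b)
    (h : ∀ x ∈ uIcc a b, ∀ y ∈ uIcc a b, dist (g x) (g y) ≤ dist (f x) (f y)) :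
    AbsolutelyContinuousOnInterval g a b := by
  rw [absolutelyContinuousOnInterval_iff] at hf ⊢
  intro ε hε
  obtain ⟨δ, hδ, H⟩ := hf ε hε
  refine ⟨δ, hδ, fun E hE hlt => lt_of_le_of_lt (Finset.sum_le_sum fun i hi => ?_) (H E hE hlt)⟩
  exact h _ (hE.1 i hi).1 _ (hE.1 i hi).2

theorem abs_exp_neg_sub_le {x y : ℝ} (hx : 0 ≤ x) (hy : 0 ≤ y) :
    |Real.exp (-x) - Real.exp (-y)| ≤ |x - y| := by
  wlog hxy : x ≤ y generalizing x y with H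
  · rw [abs_sub_comm, abs_sub_comm x]
    exact H hy hx (le_of_not_ge hxy)
  have h1 : Real.exp (-y) ≤ Real.exp (-x) := Real.exp_le_exp.2 (by linarith)
  have h2 : Real.exp (-y) = Real.exp (-x) * Real.exp (x - y) := by
    rw [← Real.exp_add]; congr 1; ring
  have h3 : x - y + 1 ≤ Real.exp (x - y) := Real.add_one_le_exp _
  have h4 : Real.exp (-x) ≤ 1 := Real.exp_le_one_iff.2 (by linarith)
  have h5 := Real.exp_pos (-x)
  rw [abs_of_nonneg (by linarith), abs_of_nonpos (by linarith)]
  nlinarith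

/-- Grönwall's inequality in integral form, with an integrable nonnegative coefficient. -/
theorem gronwall_Icc {α u : ℝ → ℝ} {a b c : ℝ} (hab : a ≤ b)
    (hα : IntervalIntegrable α volume a b) (hα0 : ∀ x, 0 ≤ α x)
    (hu : ContinuousOn u (uIcc a b))
    (h : ∀ x ∈ uIcc a b, u x ≤ c + ∫ s in a..x, α s * u s) :
    u b ≤ c * Real.exp (∫ s in a..b, α s) := by
  have hαu : IntervalIntegrable (fun s => α s * u s) volume a b := hα.mul_continuousOn hu
  set P : ℝ → ℝ := fun x => ∫ s in a..x, α s with hP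
  set g : ℝ → ℝ := fun x => c + ∫ s in a..x, α s * u s with hg
  set E : ℝ → ℝ := fun x => Real.exp (-P x) with hE
  have hP0 : ∀ x ∈ uIcc a b, 0 ≤ P x := fun x hx => by
    rw [uIcc_of_le hab] at hx
    exact intervalIntegral.integral_nonneg hx.1 fun s _ => hα0 s
  have hPac : AbsolutelyContinuousOnInterval P a b :=
    hα.absolutelyContinuousOnInterval_intervalIntegral left_mem_uIcc
  have hEac : AbsolutelyContinuousOnInterval E a b :=
    hPac.of_dist_le fun x hx y hy => abs_exp_neg_sub_le (hP0 x hx) (hP0 y hy)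
  have hgac : AbsolutelyContinuousOnInterval g a b :=
    (hαu.absolutelyContinuousOnInterval_intervalIntegral left_mem_uIcc).of_dist_le
      fun x _ y _ => by simp [hg]
  have key := AbsolutelyContinuousOnInterval.integral_deriv_mul_eq_sub hgac hEac
  -- Almost everywhere `(g E)' = α (u - g) E ≤ 0`, because `u ≤ g`.
  have hle : ∫ x in a..b, (deriv g x * E x + g x * deriv E x) ≤ 0 := by
    rw [← neg_nonneg, ← intervalIntegral.integral_neg, intervalIntegral.integral_of_le hab]
    refine integral_nonneg_of_ae ?_
    rw [Filter.EventuallyLE, ae_restrict_iff' measurableSet_Ioc]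
    filter_upwards [hα.ae_hasDerivAt_integral, hαu.ae_hasDerivAt_integral] with x h1 h2 hx
    have hx' : x ∈ uIcc a b := by rw [uIcc_of_le hab]; exact Ioc_subset_Icc_self hx
    have hdP : HasDerivAt P (α x) x := h1 hx' a left_mem_uIcc
    have hdg : HasDerivAt g (α x * u x) x := (h2 hx' a left_mem_uIcc).const_add c
    have hdE : HasDerivAt E (E x * (-α x)) x := hdP.neg.exp
    rw [hdg.deriv, hdE.deriv]
    have h3 : 0 ≤ α x * (g x - u x) := mul_nonneg (hα0 x) (sub_nonneg.2 (h x hx'))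
    have h4 : 0 ≤ E x := (Real.exp_pos _).le
    have h5 := mul_nonneg h3 h4
    simp only [Pi.zero_apply]
    linarith
  have hEa : E a = 1 := by simp [hE, hP]
  have hga : g a = c := by simp [hg]
  rw [key, hEa, hga, mul_one] at hle
  refine (h b right_mem_uIcc).trans ?_
  change g b ≤ c * Real.exp (P b)
  have h6 : E b * Real.exp (P b) = 1 := by rw [hE, ← Real.exp_add]; simp
  calc g b = g b * E b * Real.exp (P b) := by rw [mul_assoc, h6, mul_one]
    _ ≤ c * Real.exp (P b) := by
      have := Real.exp_pos (P b)
      gcongr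
      linarith

/-- Grönwall's inequality on either side of the base point `a`; the case `b < a` is reduced to
`a ≤ b` by the reflection `x ↦ -x`. -/
theorem gronwall_uIcc {α u : ℝ → ℝ} {a b c : ℝ}
    (hα : IntervalIntegrable α volume a b) (hα0 : ∀ x, 0 ≤ α x) (hu0 : ∀ x, 0 ≤ u x)
    (hu : ContinuousOn u (uIcc a b))
    (h : ∀ x ∈ uIcc a b, u x ≤ c + |∫ s in a..x, α s * u s|) :
    u b ≤ c * Real.exp |∫ s in a..b, α s| := by
  rcases le_total a b with hab | hab
  · rw [abs_of_nonneg (intervalIntegral.integral_nonneg hab fun s _ => hα0 s)]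
    refine gronwall_Icc hab hα hα0 hu fun x hx => (h x hx).trans_eq ?_
    rw [uIcc_of_le hab] at hx
    rw [abs_of_nonneg (intervalIntegral.integral_nonneg hx.1
      fun s _ => mul_nonneg (hα0 s) (hu0 s))]
  · have refl_abs : ∀ (v : ℝ → ℝ) (x : ℝ), (∀ s, 0 ≤ v s) → x ≤ a →
        ∫ s in (-a)..(-x), v (-s) = |∫ s in a..x, v s| := fun v x hv hx => by
      rw [intervalIntegral.integral_comp_neg, neg_neg, neg_neg, intervalIntegral.integral_symm x a,
        abs_neg, abs_of_nonneg (intervalIntegral.integral_nonneg hx fun s _ => hv s)]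
    have hmem : ∀ x ∈ uIcc (-a) (-b), -x ∈ uIcc a b := fun x hx => by
      rw [uIcc_of_le (by linarith)] at hx
      rw [uIcc_of_ge hab]
      constructor <;> linarith [hx.1, hx.2]
    have := gronwall_Icc (α := fun s => α (-s)) (u := fun s => u (-s)) (a := -a) (b := -b) (c := c)
      (by linarith) (by simpa using (IntervalIntegrable.iff_comp_neg).1 hα) (fun x => hα0 _)
      (hu.comp continuousOn_neg hmem)
      (fun x hx => by
        have hx' := hmem x hx
        have hxa : -x ≤ a := by rw [uIcc_of_ge hab] at hx'; exact hx'.2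
        have h1 := refl_abs (fun s => α s * u s) (-x) (fun s => mul_nonneg (hα0 s) (hu0 s)) hxa
        rw [neg_neg] at h1
        exact (h _ hx').trans_eq (by rw [← h1]))
    rw [refl_abs α b hα0 hab] at this
    simpa using this

/-! ### Linear equations on an interval -/

section LinearEquation

variable {R : Type*} [NormedRing R] {I : Set ℝ} {t0 : ℝ} {a f Z : ℝ → R} {Z0 : R}

theorem abs_intervalIntegral_le_setIntegral_s18 {v : ℝ → ℝ} (hI : I.OrdConnected) (ht0 : t0 ∈ I)
    (hv : IntegrableOn v I) (hv0 : ∀ s, 0 ≤ v s) {t : ℝ} (ht : t ∈ I) :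
    |∫ s in t0..t, v s| ≤ ∫ s in I, v s := by
  rw [← Real.norm_eq_abs, intervalIntegral.norm_intervalIntegral_eq, Real.norm_eq_abs,
    abs_of_nonneg (integral_nonneg hv0)]
  exact setIntegral_mono_set hv (Filter.Eventually.of_forall hv0)
    (uIoc_subset_uIcc.trans (hI.uIcc_subset ht0 ht)).eventuallyLE

theorem integrableOn_mul_of_bound {C : ℝ} (hIo : IsOpen I) (ha : IntegrableOn a I)
    (hZ : ContinuousOn Z I) (hC : ∀ t ∈ I, ‖Z t‖ ≤ C) :
    IntegrableOn (fun s => a s * Z s) I :=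
  Integrable.mul_bdd ha (hZ.aestronglyMeasurable hIo.measurableSet)
    ((ae_restrict_iff' hIo.measurableSet).2 (Filter.Eventually.of_forall hC))

theorem setIntegral_norm_mul_add_le {C : ℝ} (hIo : IsOpen I) (ha : IntegrableOn a I)
    (hf : IntegrableOn f I) (hC : ∀ t ∈ I, ‖Z t‖ ≤ C) :
    ∫ s in I, ‖a s * Z s + f s‖ ≤ (∫ s in I, ‖a s‖) * C + ∫ s in I, ‖f s‖ := by
  rw [← integral_mul_const, ← integral_add (ha.norm.mul_const C) hf.norm]
  refine integral_mono_of_nonneg (Filter.Eventually.of_forall fun _ => norm_nonneg _)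
    ((ha.norm.mul_const C).add hf.norm) ?_
  refine (ae_restrict_iff' hIo.measurableSet).2 (Filter.Eventually.of_forall fun s hs => ?_)
  exact (norm_add_le _ _).trans (add_le_add_left ((norm_mul_le _ _).trans
    (mul_le_mul_of_nonneg_left (hC s hs) (norm_nonneg _))) _)

variable [NormedAlgebra ℝ R]

theorem continuousOn_of_eq_integral {g : ℝ → R} (hI : I.OrdConnected)
    (hIo : IsOpen I) (hg : ∀ t ∈ I, IntervalIntegrable g volume t0 t)
    (hZ : ∀ t ∈ I, Z t = Z0 + ∫ s in t0..t, g s) : ContinuousOn Z I := by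
  intro t ht
  -- A point of `I` has a compact neighbourhood `[p, q] ⊆ I`, where the primitive is continuous.
  obtain ⟨ε, hε, hball⟩ := Metric.isOpen_iff.1 hIo t ht
  have hp : t - ε / 2 ∈ I := hball (by simp [abs_of_pos hε]; linarith)
  have hq : t + ε / 2 ∈ I := hball (by simp [abs_of_pos hε]; linarith)
  have hint : IntervalIntegrable g volume (t - ε / 2) (t + ε / 2) :=
    (hg _ hp).symm.trans (hg _ hq)
  have hnhds : uIcc (t - ε / 2) (t + ε / 2) ∈ nhds t := by
    rw [uIcc_of_le (by linarith)]
    exact Icc_mem_nhds (by linarith) (by linarith)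
  have hc : ContinuousOn (fun x => Z0 + ((∫ s in t0..(t - ε / 2), g s) +
      ∫ s in (t - ε / 2)..x, g s)) (uIcc (t - ε / 2) (t + ε / 2)) :=
    continuousOn_const.add (continuousOn_const.add
      (intervalIntegral.continuousOn_primitive_interval' hint left_mem_uIcc))
  refine ((hc.congr fun x hx => ?_).continuousAt hnhds).continuousWithinAt
  have hxI : x ∈ I := hI.uIcc_subset hp hq hx
  rw [hZ x hxI, intervalIntegral.integral_add_adjacent_intervals (hg _ hp)
    ((hg _ hp).symm.trans (hg _ hxI))]

/-- A priori bound for the solution of `Z' = a Z + f`, `Z(t0) = Z0`, uniform in `t ∈ I`. -/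
theorem norm_le_of_eq_integral (hI : I.OrdConnected) (ht0 : t0 ∈ I) (hIo : IsOpen I)
    (ha : IntegrableOn a I) (hf : IntegrableOn f I)
    (hint : ∀ t ∈ I, IntervalIntegrable (fun s => a s * Z s + f s) volume t0 t)
    (hZ : ∀ t ∈ I, Z t = Z0 + ∫ s in t0..t, (a s * Z s + f s)) {t : ℝ} (ht : t ∈ I) :
    ‖Z t‖ ≤ (‖Z0‖ + ∫ s in I, ‖f s‖) * Real.exp (∫ s in I, ‖a s‖) := by
  have hcont : ContinuousOn Z I := continuousOn_of_eq_integral hI hIo hint hZ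
  have hii : ∀ {v : ℝ → ℝ}, IntegrableOn v I → ∀ x ∈ I, IntervalIntegrable v volume t0 x :=
    fun hv x hx => (hv.mono_set (hI.uIcc_subset ht0 hx)).intervalIntegrable
  have hsub := hI.uIcc_subset ht0 ht
  have hc0 : 0 ≤ ‖Z0‖ + ∫ s in I, ‖f s‖ :=
    add_nonneg (norm_nonneg _) (integral_nonneg fun _ => norm_nonneg _)
  have hG := gronwall_uIcc (α := fun s => ‖a s‖) (u := fun s => ‖Z s‖) (a := t0) (b := t)
    (c := ‖Z0‖ + ∫ s in I, ‖f s‖) (hii ha.norm t ht) (fun _ => norm_nonneg _)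
    (fun _ => norm_nonneg _) (hcont.mono hsub).norm (fun x hx => by
      have hxI := hsub hx
      have i1 : IntervalIntegrable (fun s => ‖a s‖ * ‖Z s‖) volume t0 x :=
        (hii ha.norm x hxI).mul_continuousOn (hcont.mono (hI.uIcc_subset ht0 hxI)).norm
      have i2 : IntervalIntegrable (fun s => ‖f s‖) volume t0 x := hii hf.norm x hxI
      have h1 : ‖∫ s in t0..x, (a s * Z s + f s)‖ ≤
          |∫ s in t0..x, (‖a s‖ * ‖Z s‖ + ‖f s‖)| :=
        intervalIntegral.norm_integral_le_abs_of_norm_le (Filter.Eventually.of_forall fun s =>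
          (norm_add_le _ _).trans (add_le_add_left (norm_mul_le _ _) _)) (i1.add i2)
      rw [intervalIntegral.integral_add i1 i2] at h1
      have h2 := abs_add_le (∫ s in t0..x, ‖a s‖ * ‖Z s‖) (∫ s in t0..x, ‖f s‖)
      have h3 := abs_intervalIntegral_le_setIntegral_s18 hI ht0 hf.norm (fun _ => norm_nonneg _) hxI
      have h4 := norm_add_le Z0 (∫ s in t0..x, (a s * Z s + f s))
      rw [hZ x hxI]
      linarith)
  refine hG.trans ?_
  gcongr
  exact abs_intervalIntegral_le_setIntegral_s18 hI ht0 ha.norm (fun _ => norm_nonneg _) ht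

/-! ### Dependence on the parameter -/

/-- The parameter dependence for a linear equation in a normed algebra `R`, over a set `M` in a
normed group `P`. -/
theorem uniform_continuity_in_parameter_algebra {P : Type*} [NormedAddCommGroup P]
    {M : Set P} {A Φ Y : ℝ → P → R} {X0 : P → R}
    (hIopen : IsOpen I) (hIord : I.OrdConnected) (ht0 : t0 ∈ I)
    (hA : ∀ μ ∈ M, IntegrableOn (fun t => A t μ) I volume)
    (hΦ : ∀ μ ∈ M, IntegrableOn (fun t => Φ t μ) I volume)
    (hAY : ∀ μ ∈ M, ∀ t ∈ I,
      IntervalIntegrable (fun s => A s μ * Y s μ + Φ s μ) volume t0 t)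
    (hY : ∀ μ ∈ M, ∀ t ∈ I,
      Y t μ = X0 μ + ∫ s in t0..t, (A s μ * Y s μ + Φ s μ))
    (hbdd : ∃ K : ℝ, ∀ μ ∈ M,
      (∫ t in I, ‖A t μ‖) ≤ K ∧ (∫ t in I, ‖Φ t μ‖) ≤ K ∧ ‖X0 μ‖ ≤ K)
    (hX0uc : UniformContinuousOn X0 M)
    (hAuc : ∀ ε > 0, ∃ δ > 0, ∀ μ1 ∈ M, ∀ μ2 ∈ M, ‖μ1 - μ2‖ < δ →
      (∫ t in I, ‖A t μ1 - A t μ2‖) < ε)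
    (hΦuc : ∀ ε > 0, ∃ δ > 0, ∀ μ1 ∈ M, ∀ μ2 ∈ M, ‖μ1 - μ2‖ < δ →
      (∫ t in I, ‖Φ t μ1 - Φ t μ2‖) < ε) :
    ∀ ε > 0, ∃ δ > 0, ∀ μ1 ∈ M, ∀ μ2 ∈ M, ‖μ1 - μ2‖ < δ →
      (∀ t ∈ I, ‖Y t μ1 - Y t μ2‖ < ε) ∧
      ‖X0 μ1 - X0 μ2‖ +
          (∫ t in I, ‖(A t μ1 * Y t μ1 + Φ t μ1) - (A t μ2 * Y t μ2 + Φ t μ2)‖) < ε := by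
  obtain ⟨K, hK⟩ := hbdd
  intro ε hε
  rcases M.eq_empty_or_nonempty with hM | ⟨μ0, hμ0⟩
  · exact ⟨1, one_pos, fun μ1 h1 => by simp [hM] at h1⟩
  have hK0 : 0 ≤ K := (norm_nonneg _).trans (hK μ0 hμ0).2.2
  set e := Real.exp K with he
  have he1 : 1 ≤ e := Real.one_le_exp hK0
  set C := (K + K) * e with hC
  have hC0 : 0 ≤ C := by positivity
  have hYb : ∀ μ ∈ M, ∀ t ∈ I, ‖Y t μ‖ ≤ C := fun μ hμ t ht => by
    refine (norm_le_of_eq_integral hIord ht0 hIopen (hA μ hμ) (hΦ μ hμ) (hAY μ hμ) (hY μ hμ)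
      ht).trans ?_
    obtain ⟨h1, h2, h3⟩ := hK μ hμ
    exact mul_le_mul (add_le_add h3 h2) (Real.exp_le_exp.2 h1) (Real.exp_pos _).le (by positivity)
  -- If `X0`, `A`, `Φ` vary by at most `η`, the data of the equation for the difference of the
  -- solutions have total size `η (C + 2)`: the sup error is at most `η (C + 2) e`, and the other
  -- error at most `η (C + 2) (1 + e K) ≤ η (C + 2) e (K + 1)`. The extra `1` makes `N` positive
  -- and the final inequalities strict.
  set N := (C + 2) * (e * (K + 1)) + 1 with hN
  have hN0 : 0 < N := by positivity
  set η := ε / N with hη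
  have hη0 : 0 < η := div_pos hε hN0
  obtain ⟨δ1, hδ1, H1⟩ := Metric.uniformContinuousOn_iff.1 hX0uc η hη0
  obtain ⟨δ2, hδ2, H2⟩ := hAuc η hη0
  obtain ⟨δ3, hδ3, H3⟩ := hΦuc η hη0
  refine ⟨min δ1 (min δ2 δ3), by positivity, fun μ1 hμ1 μ2 hμ2 hd => ?_⟩
  have d1 : ‖X0 μ1 - X0 μ2‖ < η := by
    rw [← dist_eq_norm]
    exact H1 μ1 hμ1 μ2 hμ2 (by rw [dist_eq_norm]; exact hd.trans_le (min_le_left _ _))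
  have d2 := H2 μ1 hμ1 μ2 hμ2
    (hd.trans_le ((min_le_right _ _).trans (min_le_left _ _)))
  have d3 := H3 μ1 hμ1 μ2 hμ2
    (hd.trans_le ((min_le_right _ _).trans (min_le_right _ _)))
  have hYc : ContinuousOn (fun t => Y t μ2) I :=
    continuousOn_of_eq_integral hIord hIopen (hAY μ2 hμ2) (hY μ2 hμ2)
  have hdA : IntegrableOn (fun t => A t μ1 - A t μ2) I := (hA μ1 hμ1).sub (hA μ2 hμ2)
  have hdΦ : IntegrableOn (fun t => Φ t μ1 - Φ t μ2) I := (hΦ μ1 hμ1).sub (hΦ μ2 hμ2)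
  have hf : IntegrableOn (fun t => (A t μ1 - A t μ2) * Y t μ2 + (Φ t μ1 - Φ t μ2)) I :=
    (integrableOn_mul_of_bound hIopen hdA hYc (hYb μ2 hμ2)).fun_add hdΦ
  have hfle := setIntegral_norm_mul_add_le (Z := fun t => Y t μ2) hIopen hdA hdΦ (hYb μ2 hμ2)
  have hfb : ∫ t in I, ‖(A t μ1 - A t μ2) * Y t μ2 + (Φ t μ1 - Φ t μ2)‖ ≤ η * C + η :=
    hfle.trans (by gcongr)
  have halg : ∀ s, (A s μ1 * Y s μ1 + Φ s μ1) - (A s μ2 * Y s μ2 + Φ s μ2) =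
      A s μ1 * (Y s μ1 - Y s μ2) + ((A s μ1 - A s μ2) * Y s μ2 + (Φ s μ1 - Φ s μ2)) := by
    intro s
    noncomm_ring
  have hηC : 0 ≤ η * (C + 2) := by positivity
  obtain ⟨hKA, -, -⟩ := hK μ1 hμ1
  have hD : ∀ t ∈ I, ‖Y t μ1 - Y t μ2‖ ≤ η * (C + 2) * e := fun t ht => by
    have h := norm_le_of_eq_integral (Z := fun t => Y t μ1 - Y t μ2) (Z0 := X0 μ1 - X0 μ2)
      hIord ht0 hIopen (hA μ1 hμ1) hf
      (fun x hx => by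
        simp only [← halg]
        exact (hAY μ1 hμ1 x hx).sub (hAY μ2 hμ2 x hx))
      (fun x hx => by
        simp only [← halg]
        rw [intervalIntegral.integral_sub (hAY μ1 hμ1 x hx) (hAY μ2 hμ2 x hx), hY μ1 hμ1 x hx,
          hY μ2 hμ2 x hx]
        abel) ht
    refine h.trans (mul_le_mul (by linarith) (Real.exp_le_exp.2 hKA) (Real.exp_pos _).le hηC)
  have hεη : ε = η * N := by rw [hη, div_mul_cancel₀ _ hN0.ne']
  refine ⟨fun t ht => (hD t ht).trans_lt ?_, ?_⟩
  · have : 0 ≤ η * (C + 2) * (e * K) := by positivity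
    rw [hεη, hN]
    linarith
  · simp only [halg]
    have h := setIntegral_norm_mul_add_le (Z := fun t => Y t μ1 - Y t μ2) hIopen (hA μ1 hμ1) hf hD
    have h2 : (∫ t in I, ‖A t μ1‖) * (η * (C + 2) * e) ≤ K * (η * (C + 2) * e) := by gcongr
    have h3 : η * (C + 2) ≤ η * (C + 2) * e := le_mul_of_one_le_right hηC he1
    rw [hεη, hN]
    linarith

end LinearEquation

/-- Theorem 3 of the paper. If `n̂(μ) = ∫_I ‖A(t,μ)‖ dt`,
`∫_I ‖Φ(t,μ)‖ dt` and `‖X0(μ)‖` are bounded on `M`, `X0` is uniformly continuous on `M`,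
and `A`, `Φ` are integrally uniformly continuous on `M`, then the solution `Y(t,μ)` of
`dY/dt = A(t,μ)Y + Φ(t,μ)`, `Y(t0,μ) = X0(μ)` is uniformly continuous in `μ ∈ M`
uniformly with respect to `t ∈ I`, both in the sup norm and in the metric
`ρ̂(μ₁,μ₂) = ‖X0(μ₁) − X0(μ₂)‖ + ∫_I ‖Ẏ(t,μ₁) − Ẏ(t,μ₂)‖ dt`. -/
theorem uniform_continuity_in_parameter_linear (n m : ℕ)
    (I : Set ℝ) (hIopen : IsOpen I) (hIord : I.OrdConnected)
    (t0 : ℝ) (ht0 : t0 ∈ I)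
    (M : Set (EuclideanSpace ℝ (Fin m))) (hMopen : IsOpen M) (hMconn : IsConnected M)
    (A Φ X Y : ℝ → EuclideanSpace ℝ (Fin m) →
      (EuclideanSpace ℝ (Fin n) →L[ℝ] EuclideanSpace ℝ (Fin n)))
    (X0 : EuclideanSpace ℝ (Fin m) →
      (EuclideanSpace ℝ (Fin n) →L[ℝ] EuclideanSpace ℝ (Fin n)))
    (hX0cont : ContinuousOn X0 M)
    (hA : ∀ μ ∈ M, IntegrableOn (fun t => A t μ) I volume)
    (hΦ : ∀ μ ∈ M, IntegrableOn (fun t => Φ t μ) I volume)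
    (hAX : ∀ μ ∈ M, ∀ t ∈ I, IntervalIntegrable (fun s => A s μ * X s μ) volume t0 t)
    (hX : ∀ μ ∈ M, ∀ t ∈ I, X t μ = 1 + ∫ s in t0..t, A s μ * X s μ)
    (hinv : ∀ t ∈ I, ∀ μ ∈ M, IsUnit (X t μ))
    (hAY : ∀ μ ∈ M, ∀ t ∈ I,
      IntervalIntegrable (fun s => A s μ * Y s μ + Φ s μ) volume t0 t)
    (hY : ∀ μ ∈ M, ∀ t ∈ I,
      Y t μ = X0 μ + ∫ s in t0..t, (A s μ * Y s μ + Φ s μ))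
    -- (1) boundedness of `n̂`, `∫_I ‖Φ‖` and `‖X0‖` on `M`
    (hbdd : ∃ K : ℝ, ∀ μ ∈ M,
      (∫ t in I, ‖A t μ‖) ≤ K ∧ (∫ t in I, ‖Φ t μ‖) ≤ K ∧ ‖X0 μ‖ ≤ K)
    -- (2) `X0` uniformly continuous, `A` and `Φ` integrally uniformly continuous on `M`
    (hX0uc : UniformContinuousOn X0 M)
    (hAuc : ∀ ε > 0, ∃ δ > 0, ∀ μ1 ∈ M, ∀ μ2 ∈ M, ‖μ1 - μ2‖ < δ →
      (∫ t in I, ‖A t μ1 - A t μ2‖) < ε)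
    (hΦuc : ∀ ε > 0, ∃ δ > 0, ∀ μ1 ∈ M, ∀ μ2 ∈ M, ‖μ1 - μ2‖ < δ →
      (∫ t in I, ‖Φ t μ1 - Φ t μ2‖) < ε) :
    ∀ ε > 0, ∃ δ > 0, ∀ μ1 ∈ M, ∀ μ2 ∈ M, ‖μ1 - μ2‖ < δ →
      (∀ t ∈ I, ‖Y t μ1 - Y t μ2‖ < ε) ∧
      ‖X0 μ1 - X0 μ2‖ +
          (∫ t in I, ‖(A t μ1 * Y t μ1 + Φ t μ1) - (A t μ2 * Y t μ2 + Φ t μ2)‖) < ε :=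
  uniform_continuity_in_parameter_algebra hIopen hIord ht0 hA hΦ hAY hY hbdd hX0uc hAuc hΦuc
end
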